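/- Let (X,d,μ) be a metric measure space such that μ has n independent Alberti representations. Then the lower Hausdorff dimension of μ is at least n; that is, every Borel set B ⊂ X with μ(B) > 0 satisfies dim_H B ≥ n. -/

import Mathlib

open MeasureTheory Metric Set Filter Topology ENNReal NNReal
open scoped RealInnerProductSpace

noncomputable section

namespace BKO

/-- `ℝⁿ` with the Euclidean metric. -/
abbrev E (n : ℕ) : Type := EuclideanSpace ℝ (Fin n)

variable {X : Type*} [MetricSpace X]

/-- A set `G ⊆ ℝ × X` is the graph of a curve fragment if all first coordinates lie
in `[0,1]` and it is the graph of a `2`-biLipschitz function defined on a subset of `[0,1]`. -/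
def IsFragmentGraph (X : Type*) [MetricSpace X] (G : Set (ℝ × X)) : Prop :=
  (∀ p ∈ G, p.1 ∈ Set.Icc (0:ℝ) 1) ∧
  ∀ p ∈ G, ∀ q ∈ G, |p.1 - q.1| ≤ 2 * dist p.2 q.2 ∧ dist p.2 q.2 ≤ 2 * |p.1 - q.1|

/-- The space `Γ(X)` of curve fragments, identified with their graphs (nonempty compact
subsets of `[0,1] × X`), with the Hausdorff metric `d_Γ(γ₁,γ₂) = d_H(gr γ₁, gr γ₂)`. -/
def Fragment (X : Type*) [MetricSpace X] : Type _ :=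
  {G : TopologicalSpace.NonemptyCompacts (ℝ × X) // IsFragmentGraph X (G : Set (ℝ × X))}

instance : MetricSpace (Fragment X) :=
  inferInstanceAs (MetricSpace {G : TopologicalSpace.NonemptyCompacts (ℝ × X) // _})

instance : MeasurableSpace (Fragment X) := borel _
instance : BorelSpace (Fragment X) := ⟨rfl⟩

namespace Fragment

/-- The graph of a curve fragment. -/
def graph (γ : Fragment X) : Set (ℝ × X) := (γ.1 : Set (ℝ × X))

/-- The (compact) domain of a curve fragment. -/
def dom (γ : Fragment X) : Set ℝ := Prod.fst '' γ.graph

/-- The image of a curve fragment. -/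
def im (γ : Fragment X) : Set X := Prod.snd '' γ.graph

/-- The function `dom γ → X` determined by the graph (junk value off the domain). -/
def fn (γ : Fragment X) (t : ℝ) : X :=
  @dite X (∃ x, (t, x) ∈ γ.graph) (Classical.dec _)
    (fun h => h.choose) (fun _ => γ.1.nonempty.choose.2)

/-- `γ_* 𝓛¹`: the pushforward under `γ` of Lebesgue measure restricted to `dom γ`. -/
def measure [MeasurableSpace X] (γ : Fragment X) : Measure X :=
  (volume.restrict γ.dom).map γ.fn

end Fragment

/-- The measure `ν(ℙ)`, `ν(ℙ)(B) = ∫ γ_*𝓛¹(B) dℙ(γ)`. -/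
def nu [MeasurableSpace X] (ℙ : Measure (Fragment X)) : Measure X :=
  ℙ.bind Fragment.measure

/-- The cone `C(w,θ) = {v : |⟨v,w⟩| ≥ θ‖v‖}`. -/
def cone {n : ℕ} (w : E n) (θ : ℝ) : Set (E n) := {v | θ * ‖v‖ ≤ |⟪v, w⟫|}

/-- A cone in `ℝⁿ` is a set of the form `C(w,θ)` with `w ∈ Sⁿ⁻¹`, `θ ∈ (0,1)`. -/
def IsCone {n : ℕ} (C : Set (E n)) : Prop :=
  ∃ (w : E n) (θ : ℝ), ‖w‖ = 1 ∧ θ ∈ Set.Ioo (0:ℝ) 1 ∧ C = cone w θ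

/-- `γ` is a `C`-curve with respect to `φ`. -/
def IsConeCurve {n : ℕ} (φ : X → E n) (C : Set (E n)) (γ : Fragment X) : Prop :=
  ∃ δ > (0:ℝ), ∀ p ∈ γ.graph, ∀ q ∈ γ.graph,
    φ p.2 - φ q.2 ∈ C \ Metric.ball 0 (δ * |p.1 - q.1|)

/-- `ℙ` is a `C`-Alberti representation of `μ` with respect to `φ`. -/
def IsConeAlbertiRep [MeasurableSpace X] {n : ℕ} (μ : Measure X) (φ : X → E n)
    (C : Set (E n)) (ℙ : Measure (Fragment X)) : Prop :=
  IsProbabilityMeasure ℙ ∧ μ ≪ nu ℙ ∧ ∀ᵐ γ ∂ℙ, IsConeCurve φ C γ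

/-- `S` is `C`-null with respect to `φ`: every `C`-curve meets `S` in `𝓗¹`-measure zero. -/
def ConeNull [MeasurableSpace X] [BorelSpace X] {n : ℕ} (φ : X → E n) (C : Set (E n))
    (S : Set X) : Prop :=
  ∀ γ : Fragment X, IsConeCurve φ C γ → μH[1] (γ.im ∩ S) = 0

/-- Cones `C₁,…,C_m` are independent. -/
def IndepCones {n m : ℕ} (C : Fin m → Set (E n)) : Prop :=
  ∀ v : Fin m → E n, (∀ i, v i ∈ C i ∧ v i ≠ 0) → LinearIndependent ℝ v

/-- `μ` has `n` independent Alberti representations. -/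
def HasIndepAlberti [MeasurableSpace X] (μ : Measure X) (n : ℕ) : Prop :=
  ∃ φ : X → E n, (∃ K, LipschitzWith K φ) ∧ ∃ C : Fin n → Set (E n),
    (∀ i, IsCone (C i)) ∧ IndepCones C ∧ ∀ i, ∃ ℙ, IsConeAlbertiRep μ φ (C i) ℙ

/-- The collection `𝒮(φ)` of singular sets. -/
def MemScal [MeasurableSpace X] [BorelSpace X] {n : ℕ} (φ : X → E n) (S : Set X) : Prop :=
  MeasurableSet S ∧ ∀ θ ∈ Set.Ioo (0:ℝ) 1, ∃ (m : ℕ) (S' : Fin m → Set X) (w : Fin m → E n),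
    S = (⋃ i, S' i) ∧ ∀ i, MeasurableSet (S' i) ∧ ‖w i‖ = 1 ∧ ConeNull φ (cone (w i) θ) (S' i)

/-- `Lip(f,x) = limsup_{r→0⁺} sup_{d(x,y)≤r} |f(y)-f(x)|/r`. -/
def lipAt (f : X → ℝ) (x : X) : ℝ :=
  Filter.limsup (fun r : ℝ => sSup ((fun y => |f y - f x| / r) '' Metric.closedBall x r))
    (𝓝[>] (0:ℝ))

/-- `ind φ = {x : Lip(D⬝φ, x) > 0 for all D ∈ Sⁿ⁻¹}`. -/
def indSet {n : ℕ} (φ : X → E n) : Set X :=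
  {x | ∀ D : E n, ‖D‖ = 1 → 0 < lipAt (fun y => ⟪φ y, D⟫) x}

/-- `f` is differentiable with respect to `φ` at `x₀`, with a unique derivative. -/
def DiffWrtAt {n : ℕ} (φ : X → E n) (f : X → ℝ) (x₀ : X) : Prop :=
  ∃! L : E n →ₗ[ℝ] ℝ,
    Filter.Tendsto (fun x => |f x - f x₀ - L (φ x - φ x₀)| / dist x x₀) (𝓝[≠] x₀) (𝓝 0)

/-- `(X,d,μ)` is a Lipschitz differentiability space, with all chart dimensions
satisfying the predicate `P`. -/
def IsLipDiffSpaceWith [MeasurableSpace X] (μ : Measure X) (P : ℕ → Prop) : Prop :=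
  ∃ (N : ℕ → ℕ) (U : ℕ → Set X) (φ : (i : ℕ) → X → E (N i)),
    (∀ i, P (N i)) ∧ (∀ i, MeasurableSet (U i)) ∧ (⋃ i, U i) = Set.univ ∧
    (∀ i, ∃ K, LipschitzWith K (φ i)) ∧
    ∀ f : X → ℝ, (∃ K, LipschitzWith K f) →
      ∀ i, ∀ᵐ x ∂μ, x ∈ U i → DiffWrtAt (φ i) f x

/-- `ρ` is an upper gradient of `f`. -/
def IsUpperGradient (f ρ : X → ℝ) : Prop :=
  ∀ γ : ℝ → X, LipschitzOnWith 1 γ (Set.Icc 0 1) →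
    |f (γ 1) - f (γ 0)| ≤ ∫ t in Set.Icc (0:ℝ) 1, ρ (γ t)

/-- `ρ` is a `*`-upper gradient of `f`. -/
def IsStarUpperGradient (f ρ : X → ℝ) : Prop :=
  ∀ γ : Fragment X, LipschitzOnWith 1 γ.fn γ.dom →
    ∀ᵐ t ∂(volume.restrict γ.dom),
      ∀ v : ℝ, HasDerivWithinAt (f ∘ γ.fn) v γ.dom t → |v| ≤ ρ (γ.fn t)

/-- The dyadic cube of side length `2^{-m}` in `[0,1)ⁿ` indexed by `k`. -/
def dyadicCube (n m : ℕ) (k : Fin n → Fin (2 ^ m)) : Set (E n) :=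
  {x | ∀ i, (k i : ℝ) / 2 ^ m ≤ x i ∧ x i < ((k i : ℝ) + 1) / 2 ^ m}

lemma lmarginal_mul_prod_rpow_le {ι α : Type*} [Fintype ι] [DecidableEq ι] [Nonempty ι]
    [MeasurableSpace α] (μ : ι → Measure α) [∀ i, IsProbabilityMeasure (μ i)]
    {h : (ι → α) → ℝ≥0∞} (hh : Measurable h)
    {g : ι → (ι → α) → ℝ≥0∞} (hgm : ∀ i, Measurable (g i))
    (hg : ∀ i x t, g i (Function.update x i t) = g i x) (s : Finset ι) (x : ι → α) :
    (∫⋯∫⁻_s, (fun y => h y ^ (Fintype.card ι : ℝ)⁻¹ *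
        ∏ i, g i y ^ (Fintype.card ι : ℝ)⁻¹) ∂μ) x ≤
      (∫⋯∫⁻_s, h ∂μ) x ^ (Fintype.card ι : ℝ)⁻¹ *
        ∏ i, (∫⋯∫⁻_s, g i ∂μ) x ^ (Fintype.card ι : ℝ)⁻¹ := by
  set p : ℝ := (Fintype.card ι : ℝ)⁻¹ with hp
  have hp0 : 0 ≤ p := by positivity
  induction s using Finset.induction generalizing x with
  | empty => simp
  | insert j s hj ih =>
    have hm : Measurable (fun y => h y ^ p * ∏ i, g i y ^ p) :=
      (hh.pow_const p).mul (Finset.measurable_fun_prod _ fun i _ => (hgm i).pow_const p)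
    have hcomp : ∀ f : (ι → α) → ℝ≥0∞, Measurable f →
        Measurable fun t => (∫⋯∫⁻_s, f ∂μ) (Function.update x j t) := fun f hf =>
      (hf.lmarginal μ).comp (measurable_update x)
    have hconst : ∀ t, (∫⋯∫⁻_s, g j ∂μ) (Function.update x j t) = (∫⋯∫⁻_s, g j ∂μ) x := by
      intro t
      rw [lmarginal_update_of_notMem (hgm j) hj]
      have : g j ∘ (Function.update · j t) = g j := funext fun y => hg j y t
      rw [this]
    rw [lmarginal_insert _ hm hj]
    refine (lintegral_mono fun t => ih (Function.update x j t)).trans ?_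
    have hsplit : ∀ F : ι → ℝ≥0∞, ∏ i, F i = F j * ∏ i ∈ Finset.univ.erase j, F i := fun F =>
      (Finset.mul_prod_erase _ F (Finset.mem_univ j)).symm
    simp_rw [hsplit, hconst]
    have hgj : (∫⋯∫⁻_insert j s, g j ∂μ) x = (∫⋯∫⁻_s, g j ∂μ) x := by
      rw [lmarginal_insert _ (hgm j) hj]
      simp [hconst]
    have hmeas : Measurable fun t => (∫⋯∫⁻_s, h ∂μ) (Function.update x j t) ^ p *
        ∏ i ∈ Finset.univ.erase j, (∫⋯∫⁻_s, g i ∂μ) (Function.update x j t) ^ p :=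
      ((hcomp h hh).pow_const p).mul
        (Finset.measurable_fun_prod _ fun i _ => (hcomp _ (hgm i)).pow_const p)
    calc ∫⁻ t, (∫⋯∫⁻_s, h ∂μ) (Function.update x j t) ^ p * ((∫⋯∫⁻_s, g j ∂μ) x ^ p *
          ∏ i ∈ Finset.univ.erase j, (∫⋯∫⁻_s, g i ∂μ) (Function.update x j t) ^ p) ∂μ j
        = (∫⋯∫⁻_s, g j ∂μ) x ^ p * ∫⁻ t, (∫⋯∫⁻_s, h ∂μ) (Function.update x j t) ^ p *
          ∏ i ∈ Finset.univ.erase j, (∫⋯∫⁻_s, g i ∂μ) (Function.update x j t) ^ p ∂μ j := by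
          rw [← lintegral_const_mul _ hmeas]
          exact lintegral_congr fun t => by ring
      _ ≤ (∫⋯∫⁻_s, g j ∂μ) x ^ p * ((∫⁻ t, (∫⋯∫⁻_s, h ∂μ) (Function.update x j t) ∂μ j) ^ p *
          ∏ i ∈ Finset.univ.erase j,
            (∫⁻ t, (∫⋯∫⁻_s, g i ∂μ) (Function.update x j t) ∂μ j) ^ p) := by
          gcongr
          refine ENNReal.lintegral_mul_prod_norm_pow_le _ (hcomp h hh).aemeasurable
            (fun i _ => (hcomp _ (hgm i)).aemeasurable) p ?_ hp0 fun _ _ => hp0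
          have hc : (Fintype.card ι : ℝ) ≠ 0 := by simp
          rw [Finset.sum_const, Finset.card_erase_of_mem (Finset.mem_univ j), Finset.card_univ,
            nsmul_eq_mul, Nat.cast_sub Fintype.card_pos, hp]
          field_simp
          simp
      _ = _ := by
          rw [hgj, lmarginal_insert _ hh hj]
          have : ∀ i, (∫⋯∫⁻_insert j s, g i ∂μ) x =
              ∫⁻ t, (∫⋯∫⁻_s, g i ∂μ) (Function.update x j t) ∂μ j := fun i =>
            lmarginal_insert _ (hgm i) hj x
          simp_rw [this]
          ring

/-- A discrete weighted Loomis–Whitney inequality. -/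
lemma sum_mul_prod_rpow_le {n M : ℕ} (hn : n ≠ 0) (hM : M ≠ 0) (h : (Fin n → Fin M) → ℝ≥0∞)
    (g : Fin n → (Fin n → Fin M) → ℝ≥0∞)
    (hg : ∀ i x t, g i (Function.update x i t) = g i x) :
    ∑ x, h x ^ (n : ℝ)⁻¹ * ∏ i, g i x ^ (n : ℝ)⁻¹ ≤
      (∑ x, h x) ^ (n : ℝ)⁻¹ * ∏ i, ((M : ℝ≥0∞)⁻¹ * ∑ x, g i x) ^ (n : ℝ)⁻¹ := by
  have : NeZero n := ⟨hn⟩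
  have : NeZero M := ⟨hM⟩
  let μ : Fin n → Measure (Fin M) := fun _ => ProbabilityTheory.uniformOn univ
  have hM' : (M : ℝ≥0∞) ≠ 0 := by exact_mod_cast hM
  have hsing : ∀ x : Fin n → Fin M, Measure.pi μ {x} = ((M : ℝ≥0∞)⁻¹) ^ n := by
    intro x
    rw [Measure.pi_singleton]
    simp [μ, ProbabilityTheory.uniformOn_univ]
  have hint : ∀ f : (Fin n → Fin M) → ℝ≥0∞,
      ∫⁻ x, f x ∂Measure.pi μ = ((M : ℝ≥0∞)⁻¹) ^ n * ∑ x, f x := by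
    intro f
    rw [lintegral_fintype, Finset.mul_sum]
    exact Finset.sum_congr rfl fun x _ => by rw [hsing, mul_comm]
  have key := lmarginal_mul_prod_rpow_le μ (measurable_of_finite h)
    (fun i => measurable_of_finite (g i)) hg Finset.univ (fun _ => 0)
  simp only [lmarginal_univ, Fintype.card_fin, hint] at key
  set p : ℝ := (n : ℝ)⁻¹ with hp
  have hp0 : 0 ≤ p := by positivity
  have hnp : (n : ℝ) * p = 1 := by rw [hp]; field_simp
  set m : ℝ≥0∞ := (M : ℝ≥0∞)⁻¹ with hm
  have hm0 : m ≠ 0 := by simp [hm]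
  have hmt : m ≠ ∞ := by simp [hm, hM]
  have hpow : ∀ a : ℝ≥0∞, (a ^ n) ^ p = a := fun a => by
    rw [← ENNReal.rpow_natCast, ← ENNReal.rpow_mul, hnp, ENNReal.rpow_one]
  have hpow' : ∀ a : ℝ≥0∞, (a ^ p) ^ n = a := fun a => by
    rw [← ENNReal.rpow_natCast, ← ENNReal.rpow_mul, mul_comm, hnp, ENNReal.rpow_one]
  have e1 : ∏ i, (m ^ n * ∑ x, g i x) ^ p = m ^ (n - 1) * ∏ i, (m * ∑ x, g i x) ^ p := by
    have : ∀ i, (m ^ n * ∑ x, g i x) ^ p = (m ^ (n - 1)) ^ p * (m * ∑ x, g i x) ^ p := by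
      intro i
      rw [← ENNReal.mul_rpow_of_nonneg _ _ hp0, ← mul_assoc, ← pow_succ,
        Nat.sub_add_cancel (Nat.pos_of_ne_zero hn)]
    simp_rw [this]
    rw [Finset.prod_mul_distrib, Finset.prod_const, Finset.card_univ, Fintype.card_fin, hpow']
  rw [e1, ENNReal.mul_rpow_of_nonneg _ _ hp0, hpow] at key
  have e2 : m * (∑ x, h x) ^ p * (m ^ (n - 1) * ∏ i, (m * ∑ x, g i x) ^ p) =
      m ^ n * ((∑ x, h x) ^ p * ∏ i, (m * ∑ x, g i x) ^ p) := by
    have : m ^ n = m ^ (n - 1) * m := by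
      rw [← pow_succ, Nat.sub_add_cancel (Nat.pos_of_ne_zero hn)]
    rw [this]
    ring
  rw [e2] at key
  exact (ENNReal.mul_le_mul_iff_right (pow_ne_zero _ hm0) (ENNReal.pow_ne_top hmt)).1 key

/-- The index of the half-open cube of side length `M⁻ᵏ` which contains `x`. -/
def cubeIndex (M : ℕ) {n : ℕ} (k : ℕ) (x : Fin n → ℝ) : Fin n → ℤ := fun j => ⌊(M : ℝ) ^ k * x j⌋

/-- The index of the parent of the cube with index `q`. -/
def cubeParent (M : ℕ) {n : ℕ} (q : Fin n → ℤ) : Fin n → ℤ := fun j => q j / M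

lemma cubeParent_cubeIndex {M : ℕ} (hM : M ≠ 0) {n : ℕ} (k : ℕ) (x : Fin n → ℝ) :
    cubeParent M (cubeIndex M (k + 1) x) = cubeIndex M k x := by
  ext j
  have hM' : (M : ℝ) ≠ 0 := by exact_mod_cast hM
  rw [cubeParent, cubeIndex, cubeIndex, ← Int.floor_div_natCast]
  congr 1
  rw [pow_succ]
  field_simp

lemma cubeParent_iterate_cubeIndex {M : ℕ} (hM : M ≠ 0) {n : ℕ} (k l : ℕ) (x : Fin n → ℝ) :
    (cubeParent M)^[k] (cubeIndex M (l + k) x) = cubeIndex M l x := by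
  induction k with
  | zero => rfl
  | succ k ih => rw [Function.iterate_succ_apply, ← add_assoc, cubeParent_cubeIndex hM, ih]

lemma measurable_cubeIndex (M : ℕ) {n : ℕ} (k : ℕ) :
    Measurable (cubeIndex M k : (Fin n → ℝ) → Fin n → ℤ) := by
  unfold cubeIndex
  fun_prop

lemma abs_floor_sub_floor_le_one {a b : ℝ} (h : |a - b| ≤ 1) : |⌊a⌋ - ⌊b⌋| ≤ 1 := by
  rw [abs_le] at h ⊢
  have h1 : ⌊a⌋ ≤ ⌊b⌋ + 1 := by rw [← Int.floor_add_one]; exact Int.floor_le_floor (by linarith)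
  have h2 : ⌊b⌋ ≤ ⌊a⌋ + 1 := by rw [← Int.floor_add_one]; exact Int.floor_le_floor (by linarith)
  omega

lemma abs_cubeIndex_sub_le_one {M n k : ℕ} {x y : Fin n → ℝ} {j : Fin n}
    (h : (M : ℝ) ^ k * |x j - y j| ≤ 1) : |cubeIndex M k x j - cubeIndex M k y j| ≤ 1 := by
  refine abs_floor_sub_floor_le_one ?_
  rwa [← mul_sub, abs_mul, abs_of_nonneg (by positivity)]

lemma abs_sub_le_of_cubeIndex_eq {M n k : ℕ} {x y : Fin n → ℝ}
    (h : cubeIndex M k x = cubeIndex M k y) (j : Fin n) : (M : ℝ) ^ k * |x j - y j| ≤ 1 := by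
  have := Int.abs_sub_lt_one_of_floor_eq_floor (congrFun h j)
  rw [← mul_sub, abs_mul, abs_of_nonneg (by positivity)] at this
  exact this.le

/-- `Z` is contained in a `M⁻¹`-Lipschitz graph over the `i`-th coordinate axis. -/
def IsNarrow (M : ℕ) {n : ℕ} (i : Fin n) (Z : Set (Fin n → ℝ)) : Prop :=
  ∀ x ∈ Z, ∀ y ∈ Z, ∀ j, j ≠ i → M * |x j - y j| ≤ |x i - y i|

open Classical in
/-- A narrow set which meets a cube meets at most `M 3ⁿ` columns of its children. -/
lemma IsNarrow.card_columns_le {M n : ℕ} {i : Fin n} {Z : Set (Fin n → ℝ)}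
    (hZ : IsNarrow M i Z) (l : ℕ) (q : Fin n → ℤ) :
    (Finset.univ.filter fun a : Fin n → Fin M => ∃ z ∈ Z, cubeIndex M l z = q ∧
      ∀ j, j ≠ i → cubeIndex M (l + 1) z j = M * q j + (a j : ℕ)).card ≤ 3 ^ n * M := by
  by_cases hne : ∃ z ∈ Z, cubeIndex M l z = q
  swap
  · rw [Finset.filter_false_of_mem]
    · simp
    · rintro a - ⟨z, hz, hq, -⟩
      exact hne ⟨z, hz, hq⟩
  obtain ⟨z₀, hz₀, hq₀⟩ := hne
  set c := cubeIndex M (l + 1) z₀ with hc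
  let T : Fin n → Finset (Fin M) := fun j => if j = i then Finset.univ else
    Finset.univ.filter fun b : Fin M => |(M * q j + (b : ℕ) : ℤ) - c j| ≤ 1
  have hT : ∀ j, (T j).card ≤ 3 * if j = i then M else 1 := by
    intro j
    by_cases hj : j = i
    · simp [T, hj]; omega
    · simp only [T, hj, if_false, mul_one]
      calc _ ≤ (Finset.Icc (c j - 1) (c j + 1)).card := by
            refine Finset.card_le_card_of_injOn (fun b : Fin M => (M * q j + (b : ℕ) : ℤ)) ?_ ?_
            · intro b hb
              have hb' : |(M * q j + (b : ℕ) : ℤ) - c j| ≤ 1 := by simpa using hb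
              rw [abs_le] at hb'
              simp only [Finset.coe_Icc, Set.mem_Icc]
              omega
            · intro b _ b' _ hbb
              apply Fin.ext
              simpa using hbb
        _ = 3 := by simp; omega
  calc _ ≤ (Fintype.piFinset T).card := by
        refine Finset.card_le_card fun a ha => ?_
        obtain ⟨z, hz, hq, ha⟩ := (Finset.mem_filter.1 ha).2
        refine Fintype.mem_piFinset.2 fun j => ?_
        by_cases hj : j = i
        · simp [T, hj]
        · simp only [T, hj, if_false, Finset.mem_filter, Finset.mem_univ, true_and]
          rw [← ha j hj]
          refine abs_cubeIndex_sub_le_one ?_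
          calc (M : ℝ) ^ (l + 1) * |z j - z₀ j| = M ^ l * (M * |z j - z₀ j|) := by ring
            _ ≤ M ^ l * |z i - z₀ i| := by gcongr; exact hZ z hz z₀ hz₀ j hj
            _ ≤ 1 := abs_sub_le_of_cubeIndex_eq (hq.trans hq₀.symm) i
    _ = ∏ j, (T j).card := Fintype.card_piFinset T
    _ ≤ ∏ j, 3 * (if j = i then M else 1) := Finset.prod_le_prod' fun j _ => hT j
    _ = 3 ^ n * M := by rw [Finset.prod_mul_distrib]; simp

/-- The `P`-measure (possibly of a non-measurable set, from below) of the set of all `ω` such that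
`Z ω` meets the cube of level `k` with index `q`. -/
def meet (M : ℕ) {n : ℕ} {Ω : Type*} [MeasurableSpace Ω] (P : Measure Ω)
    (Z : Ω → Set (Fin n → ℝ)) (k : ℕ) (q : Fin n → ℤ) : ℝ≥0∞ :=
  ∫⁻ ω, indicator {ω | ∃ z ∈ Z ω, cubeIndex M k z = q} 1 ω ∂P

lemma sum_lintegral_le_lintegral_sum {Ω ι : Type*} [MeasurableSpace Ω] (P : Measure Ω)
    (s : Finset ι) (f : ι → Ω → ℝ≥0∞) :
    ∑ a ∈ s, ∫⁻ ω, f a ω ∂P ≤ ∫⁻ ω, ∑ a ∈ s, f a ω ∂P := by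
  classical
  induction s using Finset.induction with
  | empty => simp
  | insert a s ha ih =>
    simp_rw [Finset.sum_insert ha]
    exact (add_le_add_right ih _).trans (le_lintegral_add _ _)

/-- The geometric mean of the functions `meet`. -/
def meanMeet (M : ℕ) {n : ℕ} {Ω : Fin n → Type*} [∀ i, MeasurableSpace (Ω i)]
    (P : ∀ i, Measure (Ω i)) (Z : ∀ i, Ω i → Set (Fin n → ℝ)) (k : ℕ) (q : Fin n → ℤ) : ℝ≥0∞ :=
  ∏ i, meet M (P i) (Z i) k q ^ (n : ℝ)⁻¹

section

variable {M n : ℕ} {Ω : Fin n → Type*} [∀ i, MeasurableSpace (Ω i)]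
  {P : ∀ i, Measure (Ω i)} {Z : ∀ i, Ω i → Set (Fin n → ℝ)}

lemma sum_children_le (hn : n ≠ 0) (hM : M ≠ 0) (hZ : ∀ i ω, IsNarrow M i (Z i ω))
    (h : (Fin n → Fin M) → ℝ≥0∞) (l : ℕ) (q : Fin n → ℤ) :
    ∑ a : Fin n → Fin M, h a ^ (n : ℝ)⁻¹ *
        meanMeet M P Z (l + 1) (fun j => M * q j + (a j : ℕ)) ≤
      3 ^ n * (∑ a, h a) ^ (n : ℝ)⁻¹ * meanMeet M P Z l q := by
  classical
  let A : ∀ i, (Fin n → Fin M) → Set (Ω i) := fun i a => {ω | ∃ z ∈ Z i ω, cubeIndex M l z = q ∧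
      ∀ j, j ≠ i → cubeIndex M (l + 1) z j = M * q j + (a j : ℕ)}
  let g : Fin n → (Fin n → Fin M) → ℝ≥0∞ := fun i a => ∫⁻ ω, indicator (A i a) 1 ω ∂P i
  have hgc : ∀ i x t, g i (Function.update x i t) = g i x := by
    intro i x t
    have : A i (Function.update x i t) = A i x := by
      ext ω
      simp only [A, Set.mem_ofPred_eq]
      refine exists_congr fun z => and_congr_right fun _ => and_congr_right fun _ =>
        forall_congr' fun j => forall_congr' fun hj => ?_
      rw [Function.update_of_ne hj]
    simp only [g, this]
  have hle : ∀ i (a : Fin n → Fin M),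
      meet M (P i) (Z i) (l + 1) (fun j => M * q j + (a j : ℕ)) ≤ g i a := by
    intro i a
    refine lintegral_mono fun ω => indicator_le_indicator_of_subset ?_ (fun _ => zero_le) ω
    rintro ω ⟨z, hz, hzq⟩
    refine ⟨z, hz, ?_, fun j _ => congrFun hzq j⟩
    rw [← cubeParent_cubeIndex hM, hzq]
    ext j
    have hM' : (M : ℤ) ≠ 0 := by exact_mod_cast hM
    have h1 : ((a j : ℕ) : ℤ) / M = 0 := Int.ediv_eq_zero_of_lt (by positivity) (by
      exact_mod_cast (a j).2)
    rw [cubeParent, Int.add_ediv_of_dvd_left (dvd_mul_right _ _), h1, add_zero,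
      Int.mul_ediv_cancel_left _ hM']
  have hsum : ∀ i, (M : ℝ≥0∞)⁻¹ * ∑ a, g i a ≤ 3 ^ n * meet M (P i) (Z i) l q := by
    intro i
    have hM' : (M : ℝ≥0∞) ≠ 0 := by exact_mod_cast hM
    have : ∑ a, g i a ≤ (3 ^ n * M : ℕ) * meet M (P i) (Z i) l q := by
      refine (sum_lintegral_le_lintegral_sum _ _ _).trans ?_
      rw [meet, ← lintegral_const_mul' _ _ (ENNReal.natCast_ne_top _)]
      refine lintegral_mono fun ω => ?_
      by_cases hω : ∃ z ∈ Z i ω, cubeIndex M l z = q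
      · have h1 : ∑ a, indicator (A i a) (1 : Ω i → ℝ≥0∞) ω =
            ((Finset.univ.filter fun a : Fin n → Fin M => ω ∈ A i a).card : ℝ≥0∞) := by
          simp only [indicator_apply, Pi.one_apply]
          rw [Finset.sum_boole]
        have h2 : ω ∈ {ω | ∃ z ∈ Z i ω, cubeIndex M l z = q} := hω
        simp only [h1, indicator_of_mem h2, Pi.one_apply, mul_one]
        exact_mod_cast (hZ i ω).card_columns_le l q
      · have h1 : ∀ a, ω ∉ A i a := fun a ⟨z, hz, hq, _⟩ => hω ⟨z, hz, hq⟩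
        simp [h1]
    calc (M : ℝ≥0∞)⁻¹ * ∑ a, g i a ≤ (M : ℝ≥0∞)⁻¹ * ((3 ^ n * M : ℕ) * meet M (P i) (Z i) l q) := by
          gcongr
      _ = ((M : ℝ≥0∞)⁻¹ * M) * (3 ^ n * meet M (P i) (Z i) l q) := by push_cast; ring
      _ = _ := by rw [ENNReal.inv_mul_cancel hM' (ENNReal.natCast_ne_top M), one_mul]
  have hp0 : (0 : ℝ) ≤ (n : ℝ)⁻¹ := by positivity
  calc _ ≤ ∑ a : Fin n → Fin M, h a ^ (n : ℝ)⁻¹ * ∏ i, g i a ^ (n : ℝ)⁻¹ := by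
        refine Finset.sum_le_sum fun a _ => mul_le_mul_right (Finset.prod_le_prod' fun i _ => ?_) _
        exact ENNReal.rpow_le_rpow (hle i a) hp0
    _ ≤ (∑ x, h x) ^ (n : ℝ)⁻¹ * ∏ i, ((M : ℝ≥0∞)⁻¹ * ∑ x, g i x) ^ (n : ℝ)⁻¹ :=
        sum_mul_prod_rpow_le hn hM h g hgc
    _ ≤ (∑ x, h x) ^ (n : ℝ)⁻¹ * ∏ i, (3 ^ n * meet M (P i) (Z i) l q) ^ (n : ℝ)⁻¹ := by
        refine mul_le_mul_right (Finset.prod_le_prod' fun i _ => ?_) _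
        exact ENNReal.rpow_le_rpow (hsum i) hp0
    _ = _ := by
        have : ((3 : ℝ≥0∞) ^ n) ^ (n : ℝ)⁻¹ = 3 := by
          rw [← ENNReal.rpow_natCast, ← ENNReal.rpow_mul, mul_inv_cancel₀ (by exact_mod_cast hn),
            ENNReal.rpow_one]
        simp_rw [ENNReal.mul_rpow_of_nonneg _ _ hp0, this]
        rw [Finset.prod_mul_distrib, meanMeet]
        simp
        ring

/-- A multiscale multilinear Kakeya inequality. -/
lemma sum_meanMeet_le (hn : n ≠ 0) (hM : M ≠ 0) (hZ : ∀ i ω, IsNarrow M i (Z i ω))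
    (k l : ℕ) (q : Fin n → ℤ) (S : Finset (Fin n → ℤ))
    (hS : ∀ Q ∈ S, (cubeParent M)^[k] Q = q) :
    ∑ Q ∈ S, meanMeet M P Z (l + k) Q ≤
      (3 ^ n) ^ k * (S.card : ℝ≥0∞) ^ (n : ℝ)⁻¹ * meanMeet M P Z l q := by
  classical
  induction k generalizing l q S with
  | zero =>
    rcases S.eq_empty_or_nonempty with rfl | ⟨Q, hQ⟩
    · simp
    · have : S = {q} := Finset.eq_singleton_iff_unique_mem.2 ⟨by
        have := hS Q hQ
        simp only [Function.iterate_zero, id] at this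
        rwa [← this], fun Q' hQ' => hS Q' hQ'⟩
      simp [this]
  | succ k ih =>
    have hM' : (M : ℤ) ≠ 0 := by exact_mod_cast hM
    have hlt : ∀ b : ℤ, (b % M).toNat < M := fun b => by
      have := Int.emod_lt_of_pos b (b := M) (by positivity)
      have := Int.emod_nonneg b hM'
      omega
    let κ : (Fin n → ℤ) → Fin n → Fin M := fun Q j => ⟨((cubeParent M)^[k] Q j % M).toNat, hlt _⟩
    have hκ : ∀ Q ∈ S, (cubeParent M)^[k] Q = fun j => M * q j + (κ Q j : ℕ) := by
      intro Q hQ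
      ext j
      have h1 := congrFun (hS Q hQ) j
      rw [Function.iterate_succ_apply', cubeParent] at h1
      have h2 := Int.emod_nonneg ((cubeParent M)^[k] Q j) hM'
      simp only [κ, Int.toNat_of_nonneg h2]
      rw [← h1, Int.mul_ediv_add_emod]
    rw [← Finset.sum_fiberwise S κ]
    calc _ ≤ ∑ a : Fin n → Fin M, (3 ^ n) ^ k *
          (((S.filter fun Q => κ Q = a).card : ℝ≥0∞) ^ (n : ℝ)⁻¹ *
            meanMeet M P Z (l + 1) (fun j => M * q j + (a j : ℕ))) := by
          refine Finset.sum_le_sum fun a _ => ?_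
          rw [show l + (k + 1) = l + 1 + k by omega, ← mul_assoc]
          refine ih _ _ _ fun Q hQ => ?_
          obtain ⟨hQS, rfl⟩ := Finset.mem_filter.1 hQ
          exact hκ Q hQS
      _ ≤ (3 ^ n) ^ k * (3 ^ n *
          (∑ a : Fin n → Fin M, ((S.filter fun Q => κ Q = a).card : ℝ≥0∞)) ^ (n : ℝ)⁻¹ *
            meanMeet M P Z l q) := by
          rw [← Finset.mul_sum]
          exact mul_le_mul_right (sum_children_le hn hM hZ _ l q) _
      _ = _ := by
          rw [← Nat.cast_sum, Finset.sum_card_fiberwise_eq_card_filter]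
          simp [pow_succ, mul_assoc]

end

lemma exists_level {M : ℕ} (hM : 1 < M) {s : ℝ} (hs : 0 < s) {k₀ : ℕ} {d ε : ℝ≥0∞}
    (hd : d ≤ (M : ℝ≥0∞)⁻¹ ^ k₀) (hε : ε ≠ 0) :
    ∃ k, k₀ ≤ k ∧ d ≤ (M : ℝ≥0∞)⁻¹ ^ k ∧
      ((M : ℝ≥0∞)⁻¹ ^ k) ^ s ≤ (M : ℝ≥0∞) ^ s * d ^ s + ε := by
  have hlt : (M : ℝ≥0∞)⁻¹ < 1 := ENNReal.inv_lt_one.2 (by exact_mod_cast hM)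
  have hM0 : (M : ℝ≥0∞) ≠ 0 := by exact_mod_cast (by omega : M ≠ 0)
  have hMt : (M : ℝ≥0∞) ≠ ∞ := ENNReal.natCast_ne_top M
  have htend := ENNReal.tendsto_pow_atTop_nhds_zero_of_lt_one hlt
  by_cases hd0 : d = 0
  · have h1 : Tendsto (fun k : ℕ => ((M : ℝ≥0∞)⁻¹ ^ k) ^ s) atTop (𝓝 0) := by
      have := (ENNReal.continuous_rpow_const (y := s)).tendsto 0 |>.comp htend
      simpa only [ENNReal.zero_rpow_of_pos hs, Function.comp_def] using this
    obtain ⟨k, hk, hk'⟩ := ((h1.eventually_le_const (pos_iff_ne_zero.2 hε)).and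
      (eventually_ge_atTop k₀)).exists
    exact ⟨k, hk', by simp [hd0], hk.trans le_add_self⟩
  · obtain ⟨N, hN, hNk⟩ := ((htend.eventually_lt_const (pos_iff_ne_zero.2 hd0)).and
      (eventually_gt_atTop k₀)).exists
    have hex : ∃ N, (M : ℝ≥0∞)⁻¹ ^ N < d := ⟨N, hN⟩
    classical
    let m := Nat.find hex
    have hm : (M : ℝ≥0∞)⁻¹ ^ m < d := Nat.find_spec hex
    have hmk : k₀ < m := by
      by_contra hle
      exact absurd (hd.trans (pow_le_pow_right_of_le_one' hlt.le (not_lt.1 hle))) (not_le.2 hm)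
    refine ⟨m - 1, by omega, not_lt.1 (Nat.find_min hex (by omega)), ?_⟩
    refine le_add_right ?_
    rw [← ENNReal.mul_rpow_of_nonneg _ _ hs.le]
    refine ENNReal.rpow_le_rpow ?_ hs.le
    calc (M : ℝ≥0∞)⁻¹ ^ (m - 1) = M * (M : ℝ≥0∞)⁻¹ ^ m := by
          obtain ⟨m', hm'⟩ : ∃ m', m = m' + 1 := ⟨m - 1, by omega⟩
          rw [hm', pow_succ, Nat.add_sub_cancel, mul_comm, mul_assoc,
            ENNReal.inv_mul_cancel hM0 hMt, mul_one]
      _ ≤ M * d := by gcongr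

open Classical in
lemma exists_finset_cubes {M n : ℕ} (hM : 1 < M) (k : ℕ) (U : Set (Fin n → ℝ))
    (hU : ediam U ≤ (M : ℝ≥0∞)⁻¹ ^ k) :
    ∃ T : Finset (Fin n → ℤ), T.card ≤ 3 ^ n ∧ (∀ z ∈ U, cubeIndex M k z ∈ T) ∧
      ∀ Q ∈ T, ∃ z ∈ U, cubeIndex M k z = Q := by
  rcases U.eq_empty_or_nonempty with rfl | ⟨z₀, hz₀⟩
  · exact ⟨∅, by simp, by simp, by simp⟩
  set c := cubeIndex M k z₀ with hc
  let T := (Fintype.piFinset fun j => Finset.Icc (c j - 1) (c j + 1)).filter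
    fun Q => ∃ z ∈ U, cubeIndex M k z = Q
  refine ⟨T, ?_, fun z hz => ?_, fun Q hQ => (Finset.mem_filter.1 hQ).2⟩
  · refine (Finset.card_filter_le _ _).trans ?_
    rw [Fintype.card_piFinset]
    have : ∀ j, (c j + 1 + 1 - (c j - 1)).toNat = 3 := fun j => by omega
    simp [this]
  · refine Finset.mem_filter.2 ⟨Fintype.mem_piFinset.2 fun j => ?_, z, hz, rfl⟩
    have hM0 : (0 : ℝ) < M := by exact_mod_cast (by omega : 0 < M)
    have h1 : |cubeIndex M k z j - c j| ≤ 1 := by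
      refine abs_cubeIndex_sub_le_one ?_
      have h2 : edist z z₀ ≤ (M : ℝ≥0∞)⁻¹ ^ k := (edist_le_ediam_of_mem hz hz₀).trans hU
      have h3 : dist z z₀ ≤ ((M : ℝ)⁻¹) ^ k := by
        rw [edist_dist] at h2
        have := ENNReal.toReal_mono (by
          exact ENNReal.pow_ne_top (by simp; omega)) h2
        rwa [ENNReal.toReal_ofReal dist_nonneg, ENNReal.toReal_pow, ENNReal.toReal_inv,
          ENNReal.toReal_natCast] at this
      have h4 : |z j - z₀ j| ≤ ((M : ℝ)⁻¹) ^ k := (dist_le_pi_dist z z₀ j).trans h3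
      calc (M : ℝ) ^ k * |z j - z₀ j| ≤ M ^ k * ((M : ℝ)⁻¹) ^ k := by gcongr
        _ = 1 := by rw [← mul_pow, mul_inv_cancel₀ hM0.ne', one_pow]
    rw [abs_le] at h1
    simp only [Finset.mem_Icc]
    omega

lemma exists_cubes_of_hausdorffMeasure_eq_zero {M n : ℕ} (hM : 1 < M) {s : ℝ} (hs : 0 < s)
    {E : Set (Fin n → ℝ)} (hE : μH[s] E = 0) (k₀ : ℕ) :
    ∃ S : ℕ → Finset (Fin n → ℤ),
      (∀ k, ((S k).card : ℝ≥0∞) ≤ 3 ^ n * (((M : ℝ≥0∞) ^ s + 1) * ((M : ℝ≥0∞) ^ s) ^ k)) ∧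
      (∀ k, ∀ Q ∈ S k, ∃ z ∈ E, cubeIndex M k z = Q) ∧
      ∀ z ∈ E, ∃ k, k₀ ≤ k ∧ cubeIndex M k z ∈ S k := by
  classical
  have hM0 : (M : ℝ≥0∞) ≠ 0 := by exact_mod_cast (by omega : M ≠ 0)
  have hMt : (M : ℝ≥0∞) ≠ ∞ := ENNReal.natCast_ne_top M
  have hr : 0 < (M : ℝ≥0∞)⁻¹ ^ k₀ := ENNReal.pow_pos (by simp) _
  rw [Measure.hausdorffMeasure_apply] at hE
  have h1 := (le_iSup₂ (f := fun (r : ℝ≥0∞) (_ : 0 < r) =>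
    ⨅ (t : ℕ → Set (Fin n → ℝ)) (_ : E ⊆ ⋃ n, t n) (_ : ∀ n, ediam (t n) ≤ r),
      ∑' n, ⨆ _ : (t n).Nonempty, ediam (t n) ^ s) _ hr).trans hE.le
  have h2 := h1.trans_lt one_pos
  simp only [iInf_lt_iff] at h2
  obtain ⟨t, htE, htr, hsum⟩ := h2
  have hsum' : ∑' j, ediam (t j) ^ s ≤ 1 := by
    refine (ENNReal.tsum_le_tsum fun j => ?_).trans hsum.le
    rcases (t j).eq_empty_or_nonempty with h | h
    · simp [h, hs]
    · exact le_iSup (fun _ : (t j).Nonempty => ediam (t j) ^ s) h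
  choose κ hκ₀ hκ hκs using fun j => exists_level hM hs (htr j)
    (pow_ne_zero (j + 1) (by simp : (2 : ℝ≥0∞)⁻¹ ≠ 0))
  have hκsum : ∑' j, ((M : ℝ≥0∞)⁻¹ ^ κ j) ^ s ≤ (M : ℝ≥0∞) ^ s + 1 := by
    refine (ENNReal.tsum_le_tsum hκs).trans ?_
    rw [ENNReal.tsum_add, ENNReal.tsum_mul_left]
    refine add_le_add (mul_le_of_le_one_right' hsum') ?_
    rw [ENNReal.tsum_geometric_add_one, ENNReal.one_sub_inv_two, inv_inv,
      ENNReal.inv_mul_cancel (by simp) (by simp)]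
  choose T hTcard hT hT' using fun j => exists_finset_cubes hM (κ j) (t j ∩ E)
    ((ediam_mono inter_subset_left).trans (hκ j))
  have hJ : ∀ k, ∃ J : Finset ℕ, (∀ j, κ j = k → j ∈ J) ∧ (∀ j ∈ J, κ j = k) ∧
      (J.card : ℝ≥0∞) ≤ ((M : ℝ≥0∞) ^ s + 1) * ((M : ℝ≥0∞) ^ s) ^ k := by
    intro k
    have hε : ((M : ℝ≥0∞)⁻¹ ^ k) ^ s ≠ 0 := by
      simp [ENNReal.rpow_eq_zero_iff, hs.le, hs]
    obtain ⟨hf, hcard⟩ := ENNReal.finset_card_const_le_le_of_tsum_le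
      (ENNReal.add_ne_top.2 ⟨ENNReal.rpow_ne_top_of_nonneg hs.le hMt, ENNReal.one_ne_top⟩)
      hκsum hε
    refine ⟨hf.toFinset.filter fun j => κ j = k, fun j hj => ?_,
      fun j hj => (Finset.mem_filter.1 hj).2, ?_⟩
    · simp [hj]
    · refine (Nat.cast_le.2 (Finset.card_filter_le _ _)).trans (hcard.trans_eq ?_)
      rw [div_eq_mul_inv]
      congr 1
      rw [← ENNReal.inv_pow, ENNReal.inv_rpow, inv_inv, ← ENNReal.rpow_natCast,
        ← ENNReal.rpow_mul, mul_comm, ENNReal.rpow_mul, ENNReal.rpow_natCast]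
  choose J hJ hJ' hJcard using hJ
  refine ⟨fun k => (J k).biUnion T, fun k => ?_, fun k Q hQ => ?_, fun z hz => ?_⟩
  · calc (((J k).biUnion T).card : ℝ≥0∞) ≤ (((J k).card * 3 ^ n : ℕ) : ℝ≥0∞) :=
          Nat.cast_le.2 (Finset.card_biUnion_le_card_mul _ _ _ fun j _ => hTcard j)
      _ = 3 ^ n * (J k).card := by push_cast; ring
      _ ≤ _ := by gcongr; exact hJcard k
  · obtain ⟨j, hj, hQ⟩ := Finset.mem_biUnion.1 hQ
    obtain ⟨z, hz, hzQ⟩ := hT' j Q hQ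
    exact ⟨z, hz.2, by rw [← hJ' k j hj, hzQ]⟩
  · obtain ⟨j, hj⟩ := mem_iUnion.1 (htE hz)
    exact ⟨κ j, hκ₀ j, Finset.mem_biUnion.2 ⟨j, hJ _ j rfl, hT j z ⟨hj, hz⟩⟩⟩

/-- Sets of zero `s`-dimensional Hausdorff measure are null for any measure on `ℝⁿ` which
is dominated, in each coordinate direction, by a family of narrow sets. -/
lemma measure_eq_zero_of_hausdorffMeasure_eq_zero {M n : ℕ} {Ω : Fin n → Type*}
    [∀ i, MeasurableSpace (Ω i)] {P : ∀ i, Measure (Ω i)} [∀ i, IsProbabilityMeasure (P i)]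
    {Z : ∀ i, Ω i → Set (Fin n → ℝ)} (hn : n ≠ 0) (hM : 1 < M)
    (hZ : ∀ i ω, IsNarrow M i (Z i ω)) {s : ℝ} (hs : 0 < s)
    (hMs : (3 : ℝ≥0∞) ^ n * (M : ℝ≥0∞) ^ (s / n) < M)
    (m : Measure (Fin n → ℝ)) {c : ℝ≥0∞} (hc : c ≠ ∞)
    (hm : ∀ k q i, m {z | cubeIndex M k z = q} ≤
      c * (M : ℝ≥0∞)⁻¹ ^ k * meet M (P i) (Z i) k q)
    {E : Set (Fin n → ℝ)} (hE : μH[s] E = 0) : m E = 0 := by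
  have hM0 : (M : ℝ≥0∞) ≠ 0 := by exact_mod_cast (by omega : M ≠ 0)
  have hMt : (M : ℝ≥0∞) ≠ ∞ := ENNReal.natCast_ne_top M
  have hp0 : (0 : ℝ) ≤ (n : ℝ)⁻¹ := by positivity
  have hn' : (n : ℝ) ≠ 0 := by exact_mod_cast hn
  have hcover : E = ⋃ q, E ∩ {z | cubeIndex M 0 z = q} := by
    ext z; simp
  rw [hcover]
  refine measure_iUnion_null fun q => ?_
  set F := E ∩ {z | cubeIndex M 0 z = q} with hF
  have hFs : μH[s] F = 0 := measure_mono_null inter_subset_left hE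
  have hcube : ∀ k Q, m {z | cubeIndex M k z = Q} ≤
      c * (M : ℝ≥0∞)⁻¹ ^ k * meanMeet M P Z k Q := by
    intro k Q
    have hroot : ∀ x : ℝ≥0∞, ∏ _i : Fin n, x ^ (n : ℝ)⁻¹ = x := fun x => by
      rw [Finset.prod_const, Finset.card_univ, Fintype.card_fin, ← ENNReal.rpow_natCast,
        ← ENNReal.rpow_mul, inv_mul_cancel₀ hn', ENNReal.rpow_one]
    rw [meanMeet, ← hroot (m _)]
    nth_rw 1 [← hroot (c * (M : ℝ≥0∞)⁻¹ ^ k)]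
    rw [← Finset.prod_mul_distrib]
    refine Finset.prod_le_prod' fun i _ => ?_
    rw [← ENNReal.mul_rpow_of_nonneg _ _ hp0]
    exact ENNReal.rpow_le_rpow (hm k Q i) hp0
  have hG : meanMeet M P Z 0 q ≤ 1 := by
    refine Finset.prod_le_one' fun i _ => ENNReal.rpow_le_one ?_ hp0
    calc meet M (P i) (Z i) 0 q ≤ ∫⁻ _, 1 ∂P i :=
          lintegral_mono fun ω => indicator_le_self' (fun _ _ => zero_le) ω
      _ = 1 := by simp
  set A : ℝ≥0∞ := (3 ^ n * ((M : ℝ≥0∞) ^ s + 1)) ^ (n : ℝ)⁻¹ with hA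
  have hAt : A ≠ ∞ := ENNReal.rpow_ne_top_of_nonneg hp0 (ENNReal.mul_ne_top (by simp)
    (ENNReal.add_ne_top.2 ⟨ENNReal.rpow_ne_top_of_nonneg hs.le hMt, ENNReal.one_ne_top⟩))
  set ρ : ℝ≥0∞ := (M : ℝ≥0∞)⁻¹ * (3 ^ n * (M : ℝ≥0∞) ^ (s / n)) with hρ
  have hρ1 : ρ < 1 := by
    rw [hρ, mul_comm, ← div_eq_mul_inv]
    exact (ENNReal.div_lt_iff (Or.inl hM0) (Or.inl hMt)).2 (by rwa [one_mul])
  have hbound : ∀ k₀ : ℕ, m F ≤ c * A * (1 - ρ)⁻¹ * ρ ^ k₀ := by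
    intro k₀
    obtain ⟨S, hScard, hSE, hSF⟩ := exists_cubes_of_hausdorffMeasure_eq_zero hM hs hFs k₀
    have hSlevel : ∀ k, ∑ Q ∈ S k, m {z | cubeIndex M k z = Q} ≤ c * A * ρ ^ k := by
      intro k
      have h1 : ∑ Q ∈ S k, meanMeet M P Z k Q ≤
          (3 ^ n) ^ k * ((S k).card : ℝ≥0∞) ^ (n : ℝ)⁻¹ * 1 := by
        have := sum_meanMeet_le (P := P) hn (by omega) hZ k 0 q (S k) fun Q hQ => by
          obtain ⟨z, hz, rfl⟩ := hSE k Q hQ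
          have h := cubeParent_iterate_cubeIndex (by omega : M ≠ 0) k 0 z
          rw [zero_add] at h
          rw [h]
          exact hz.2
        rw [zero_add] at this
        exact this.trans (mul_le_mul_right hG _)
      have h2 : ((S k).card : ℝ≥0∞) ^ (n : ℝ)⁻¹ ≤ A * ((M : ℝ≥0∞) ^ (s / n)) ^ k := by
        refine (ENNReal.rpow_le_rpow (hScard k) hp0).trans_eq ?_
        rw [← mul_assoc, ENNReal.mul_rpow_of_nonneg _ _ hp0]
        congr 1
        simp_rw [← ENNReal.rpow_natCast, ← ENNReal.rpow_mul]
        congr 1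
        ring
      calc ∑ Q ∈ S k, m {z | cubeIndex M k z = Q}
          ≤ ∑ Q ∈ S k, c * (M : ℝ≥0∞)⁻¹ ^ k * meanMeet M P Z k Q :=
            Finset.sum_le_sum fun Q _ => hcube k Q
        _ = c * (M : ℝ≥0∞)⁻¹ ^ k * ∑ Q ∈ S k, meanMeet M P Z k Q := by rw [Finset.mul_sum]
        _ ≤ c * (M : ℝ≥0∞)⁻¹ ^ k * ((3 ^ n) ^ k * (A * ((M : ℝ≥0∞) ^ (s / n)) ^ k) * 1) := by
            gcongr
            exact h1.trans (by gcongr)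
        _ = c * A * ρ ^ k := by rw [hρ, mul_pow, mul_pow]; ring
    have hsub : F ⊆ ⋃ i : ℕ, ⋃ Q ∈ S (i + k₀), {z | cubeIndex M (i + k₀) z = Q} := by
      intro z hz
      obtain ⟨k, hk, hzk⟩ := hSF z hz
      refine mem_iUnion.2 ⟨k - k₀, ?_⟩
      rw [Nat.sub_add_cancel hk]
      exact mem_iUnion₂.2 ⟨_, hzk, rfl⟩
    calc m F ≤ ∑' i : ℕ, m (⋃ Q ∈ S (i + k₀), {z | cubeIndex M (i + k₀) z = Q}) :=
          (measure_mono hsub).trans (measure_iUnion_le _)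
      _ ≤ ∑' i : ℕ, c * A * ρ ^ k₀ * ρ ^ i := ENNReal.tsum_le_tsum fun i =>
          (measure_biUnion_finset_le _ _).trans ((hSlevel _).trans_eq (by rw [pow_add]; ring))
      _ = _ := by rw [ENNReal.tsum_mul_left, ENNReal.tsum_geometric]; ring
  have hlim : Tendsto (fun k : ℕ => c * A * (1 - ρ)⁻¹ * ρ ^ k) atTop (𝓝 0) := by
    have := ENNReal.Tendsto.const_mul (a := c * A * (1 - ρ)⁻¹)
      (ENNReal.tendsto_pow_atTop_nhds_zero_of_lt_one hρ1) (Or.inr (ENNReal.mul_ne_top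
        (ENNReal.mul_ne_top hc hAt) (ENNReal.inv_ne_top.2 (tsub_pos_of_lt hρ1).ne')))
    simpa using this
  exact le_antisymm (ge_of_tendsto' hlim hbound) zero_le

namespace Fragment

lemma edist_eq (γ γ' : Fragment X) : edist γ γ' = hausdorffEDist γ.graph γ'.graph := rfl

lemma isCompact_graph (γ : Fragment X) : IsCompact γ.graph := γ.1.isCompact

lemma mem_graph_of_tendsto {γ : ℕ → Fragment X} {γ₀ : Fragment X} (hγ : Tendsto γ atTop (𝓝 γ₀))
    {p : ℕ → ℝ × X} {p₀ : ℝ × X} (hp : ∀ m, p m ∈ (γ m).graph) (hp₀ : Tendsto p atTop (𝓝 p₀)) :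
    p₀ ∈ γ₀.graph := by
  rw [mem_iff_infEDist_zero_of_closed γ₀.isCompact_graph.isClosed]
  have h1 : Tendsto (fun m => infEDist (p m) γ₀.graph) atTop (𝓝 (infEDist p₀ γ₀.graph)) :=
    (continuous_infEDist.tendsto p₀).comp hp₀
  refine tendsto_nhds_unique h1 (tendsto_of_tendsto_of_tendsto_of_le_of_le tendsto_const_nhds
    (tendsto_iff_edist_tendsto_0.1 hγ) (fun _ => zero_le) fun m => ?_)
  exact infEDist_le_hausdorffEDist_of_mem (hp m)

lemma exists_tendsto_of_mem_graph {γ : ℕ → Fragment X} {γ₀ : Fragment X}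
    (hγ : Tendsto γ atTop (𝓝 γ₀)) {q : ℝ × X} (hq : q ∈ γ₀.graph) :
    ∃ p : ℕ → ℝ × X, (∀ m, p m ∈ (γ m).graph) ∧ Tendsto p atTop (𝓝 q) := by
  choose p hp hpq using fun m =>
    (γ m).isCompact_graph.exists_infEDist_eq_edist (γ m).1.nonempty q
  refine ⟨p, hp, tendsto_iff_edist_tendsto_0.2 (tendsto_of_tendsto_of_tendsto_of_le_of_le
    tendsto_const_nhds (tendsto_iff_edist_tendsto_0.1 hγ) (fun _ => zero_le) fun m => ?_)⟩
  rw [edist_comm (p m), ← hpq m, edist_eq, hausdorffEDist_comm]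
  exact infEDist_le_hausdorffEDist_of_mem hq

end Fragment

/-- Pairs `(γ, x)` such that `γ` passes through `x` at a time in `I` and, up to times which are
`r`-close, the increments of `φ ∘ γ` lie in `N` and have speed at least `K⁻¹`. -/
def aligned {n : ℕ} (φ : X → E n) (N : Set (E n)) (I : Set ℝ) (r K : ℝ) :
    Set (Fragment X × X) :=
  {p | ∃ t ∈ I, (t, p.2) ∈ p.1.graph ∧ ∀ q ∈ p.1.graph, |q.1 - t| < r →
    φ q.2 - φ p.2 ∈ N ∧ |q.1 - t| ≤ K * ‖φ q.2 - φ p.2‖}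

lemma isClosed_aligned {n : ℕ} {φ : X → E n} (hφ : Continuous φ) {N : Set (E n)}
    (hN : IsClosed N) {I : Set ℝ} (hI : IsCompact I) (r K : ℝ) :
    IsClosed (aligned φ N I r K) := by
  refine IsSeqClosed.isClosed fun p p₀ hp hp₀ => ?_
  choose t htI htp ht using hp
  obtain ⟨t₀, ht₀, σ, hσ, htσ⟩ := hI.tendsto_subseq htI
  have hpσ := hp₀.comp hσ.tendsto_atTop
  have hγ : Tendsto (fun m => (p (σ m)).1) atTop (𝓝 p₀.1) := (continuous_fst.tendsto _).comp hpσ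
  have hx : Tendsto (fun m => (p (σ m)).2) atTop (𝓝 p₀.2) := (continuous_snd.tendsto _).comp hpσ
  refine ⟨t₀, ht₀, Fragment.mem_graph_of_tendsto hγ (fun m => htp (σ m))
    (htσ.prodMk_nhds hx), fun q hq hqr => ?_⟩
  obtain ⟨q', hq', hqq'⟩ := Fragment.exists_tendsto_of_mem_graph hγ hq
  have h1 : Tendsto (fun m => |(q' m).1 - t (σ m)|) atTop (𝓝 |q.1 - t₀|) :=
    (((continuous_fst.tendsto _).comp hqq').sub htσ).abs
  have h2 : Tendsto (fun m => φ (q' m).2 - φ (p (σ m)).2) atTop (𝓝 (φ q.2 - φ p₀.2)) :=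
    ((hφ.tendsto _).comp ((continuous_snd.tendsto _).comp hqq')).sub ((hφ.tendsto _).comp hx)
  have h3 := (h1.eventually_lt_const hqr).mono fun m hm => ht (σ m) _ (hq' m) hm
  exact ⟨hN.mem_of_tendsto h2 (h3.mono fun m hm => hm.1),
    le_of_tendsto_of_tendsto h1 (h2.norm.const_mul K) (h3.mono fun m hm => hm.2)⟩

namespace Fragment

lemma fn_eq {γ : Fragment X} {t : ℝ} {x : X} (h : (t, x) ∈ γ.graph) : γ.fn t = x := by
  have hex : ∃ x, (t, x) ∈ γ.graph := ⟨x, h⟩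
  have h1 : γ.fn t = hex.choose := dif_pos hex
  have h2 := (γ.2.2 _ hex.choose_spec _ h).2
  simp only [sub_self, abs_zero, mul_zero] at h2
  rw [h1]
  exact dist_le_zero.1 h2

lemma mk_fn_mem {γ : Fragment X} {t : ℝ} (ht : t ∈ γ.dom) : (t, γ.fn t) ∈ γ.graph := by
  obtain ⟨⟨t, x⟩, h, rfl⟩ := ht
  rwa [fn_eq h]

lemma isCompact_dom (γ : Fragment X) : IsCompact γ.dom := γ.isCompact_graph.image continuous_fst

lemma lipschitzOnWith_fn (γ : Fragment X) : LipschitzOnWith 2 γ.fn γ.dom :=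
  LipschitzOnWith.of_dist_le_mul fun s hs t ht => by
    simpa [Real.dist_eq] using (γ.2.2 _ (mk_fn_mem hs) _ (mk_fn_mem ht)).2

lemma aemeasurable_fn [MeasurableSpace X] [BorelSpace X] (γ : Fragment X) :
    AEMeasurable γ.fn (volume.restrict γ.dom) :=
  γ.lipschitzOnWith_fn.continuousOn.aemeasurable γ.isCompact_dom.isClosed.measurableSet

lemma measure_univ_le_one [MeasurableSpace X] [BorelSpace X] (γ : Fragment X) :
    γ.measure univ ≤ 1 := by
  rw [measure, Measure.map_apply_of_aemeasurable γ.aemeasurable_fn MeasurableSet.univ,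
    preimage_univ, Measure.restrict_apply_univ]
  have h : γ.dom ⊆ Icc 0 1 := by
    rintro _ ⟨p, hp, rfl⟩
    exact γ.2.1 p hp
  simpa using measure_mono (μ := volume) h

lemma measure_apply [MeasurableSpace X] [BorelSpace X] (γ : Fragment X) {A : Set X}
    (hA : MeasurableSet A) : γ.measure A = volume (γ.dom ∩ γ.fn ⁻¹' A) := by
  rw [measure, Measure.map_apply_of_aemeasurable γ.aemeasurable_fn hA,
    Measure.restrict_apply' γ.isCompact_dom.isClosed.measurableSet, inter_comm]

end Fragment

/-- The closed cone of vectors `v` whose component orthogonal to the unit vector `u` is at most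
`η` times the component parallel to `u`. -/
def tube {n : ℕ} (u : E n) (η : ℝ) : Set (E n) := {v | ‖v - ⟪v, u⟫ • u‖ ≤ η * |⟪v, u⟫|}

lemma isClosed_tube {n : ℕ} (u : E n) (η : ℝ) : IsClosed (tube u η) :=
  isClosed_le (by fun_prop) (by fun_prop)

lemma smul_mem_tube {n : ℕ} {u v : E n} {η : ℝ} (a : ℝ) (h : v ∈ tube u η) :
    a • v ∈ tube u η := by
  simp only [tube, Set.mem_ofPred_eq, real_inner_smul_left] at h ⊢
  rw [mul_smul, ← smul_sub, norm_smul, abs_mul, Real.norm_eq_abs, mul_left_comm]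
  gcongr

lemma isClosed_cone {n : ℕ} (w : E n) (θ : ℝ) : IsClosed (cone w θ) :=
  isClosed_le (by fun_prop) (by fun_prop)

lemma smul_mem_cone {n : ℕ} {w v : E n} {θ : ℝ} (a : ℝ) (h : v ∈ cone w θ) :
    a • v ∈ cone w θ := by
  simp only [cone, Set.mem_ofPred_eq, real_inner_smul_left] at h ⊢
  rw [norm_smul, abs_mul, Real.norm_eq_abs, mul_left_comm]
  gcongr

lemma IsCone.isClosed {n : ℕ} {C : Set (E n)} (hC : IsCone C) : IsClosed C := by
  obtain ⟨w, θ, -, -, rfl⟩ := hC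
  exact isClosed_cone w θ

lemma IsCone.smul_mem {n : ℕ} {C : Set (E n)} (hC : IsCone C) {v : E n} (a : ℝ) (h : v ∈ C) :
    a • v ∈ C := by
  obtain ⟨w, θ, -, -, rfl⟩ := hC
  exact smul_mem_cone a h

lemma IsCone.exists_mem_norm_eq_one {n : ℕ} {C : Set (E n)} (hC : IsCone C) :
    ∃ w ∈ C, ‖w‖ = 1 := by
  obtain ⟨w, θ, hw, hθ, rfl⟩ := hC
  refine ⟨w, ?_, hw⟩
  simp [cone, hw, hθ.2.le]

lemma exists_countable_tubes {n : ℕ} {C : Set (E n)} (hC : IsCone C) {η : ℝ} (hη : 0 < η) :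
    ∃ D : Set (E n), D.Countable ∧ D ⊆ C ∩ sphere 0 1 ∧
      ∀ v ∈ C, v ≠ 0 → ∃ u ∈ D, tube u η ∈ 𝓝 v := by
  obtain ⟨S, hS, hSd⟩ := TopologicalSpace.exists_countable_dense ↥(C ∩ sphere (0 : E n) 1)
  refine ⟨(↑) '' S, hS.image _, ?_, fun v hv hv0 => ?_⟩
  · rintro _ ⟨u, -, rfl⟩
    exact u.2
  have hv' : ‖v‖ ≠ 0 := norm_ne_zero_iff.2 hv0
  let u₀ : ↥(C ∩ sphere (0 : E n) 1) := ⟨‖v‖⁻¹ • v, hC.smul_mem _ hv, by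
    simp [norm_smul, hv']⟩
  have hopen : IsOpen {u : ↥(C ∩ sphere (0 : E n) 1) |
      ‖v - ⟪v, (u : E n)⟫ • (u : E n)‖ < η * |⟪v, (u : E n)⟫|} :=
    isOpen_lt (by fun_prop) (by fun_prop)
  obtain ⟨u, huS, hu⟩ := hSd.exists_mem_open hopen ⟨u₀, by
    have h1 : ⟪v, (u₀ : E n)⟫ = ‖v‖ := by
      simp only [u₀, real_inner_smul_right, real_inner_self_eq_norm_sq]
      field_simp
    simp only [Set.mem_ofPred_eq, h1, u₀, smul_smul, mul_inv_cancel₀ hv', one_smul, sub_self,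
      norm_zero]
    positivity⟩
  refine ⟨u, ⟨u, huS, rfl⟩, Filter.mem_of_superset ((isOpen_lt
    (f := fun v : E n => ‖v - ⟪v, (u : E n)⟫ • (u : E n)‖) (g := fun v => η * |⟪v, (u : E n)⟫|)
    (by fun_prop) (by fun_prop)).mem_nhds hu) fun w hw => ?_⟩
  exact show ‖w - ⟪w, (u : E n)⟫ • (u : E n)‖ ≤ η * |⟪w, (u : E n)⟫| from le_of_lt hw

/-- The standard countable family of sets `aligned`. -/
def piece {n : ℕ} (φ : X → E n) (η : ℝ) (u : E n) (k j : ℕ) : Set (Fragment X × X) :=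
  aligned φ (tube u η) (Icc (j / (2 * (k + 1))) ((j + 1) / (2 * (k + 1)))) (1 / (k + 1)) (k + 1)

lemma exists_mem_piece {n : ℕ} {φ : X → E n} {C D : Set (E n)} {η : ℝ} (hC : IsCone C)
    (hD : ∀ v ∈ C, v ≠ 0 → ∃ u ∈ D, tube u η ∈ 𝓝 v) {γ : Fragment X} (hγ : IsConeCurve φ C γ)
    {t : ℝ} (ht : t ∈ γ.dom) (hd : DifferentiableWithinAt ℝ (φ ∘ γ.fn) γ.dom t) :
    ∃ u ∈ D, ∃ k j : ℕ, (γ, γ.fn t) ∈ piece φ η u k j := by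
  obtain ⟨δ, hδ, hγ⟩ := hγ
  set f := φ ∘ γ.fn with hf
  have hCf : ∀ s ∈ γ.dom, f s - f t ∈ C ∧ δ * |s - t| ≤ ‖f s - f t‖ := fun s hs => by
    have := hγ _ (Fragment.mk_fn_mem hs) _ (Fragment.mk_fn_mem ht)
    refine ⟨this.1, not_lt.1 fun h => this.2 ?_⟩
    rwa [mem_ball, dist_zero_right]
  have hslope : ∀ s ∈ γ.dom, s ≠ t → slope f t s ∈ C ∧ δ ≤ ‖slope f t s‖ := by
    intro s hs hst
    obtain ⟨h1, h2⟩ := hCf s hs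
    have h3 : 0 < |s - t| := abs_pos.2 (sub_ne_zero.2 hst)
    rw [slope_def_module]
    refine ⟨hC.smul_mem _ h1, ?_⟩
    rw [norm_smul, norm_inv, Real.norm_eq_abs, inv_mul_eq_div, le_div_iff₀ h3]
    exact h2
  obtain ⟨u, huD, hu⟩ : ∃ u ∈ D, ∀ᶠ s in 𝓝[γ.dom \ {t}] t, slope f t s ∈ tube u η := by
    rcases eq_or_neBot (𝓝[γ.dom \ {t}] t) with hbot | hne
    · obtain ⟨w, hwC, hw⟩ := hC.exists_mem_norm_eq_one
      obtain ⟨u, hu, -⟩ := hD w hwC (norm_ne_zero_iff.1 (by simp [hw]))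
      exact ⟨u, hu, by simp [hbot]⟩
    · have hlim := hasDerivWithinAt_iff_tendsto_slope.1 hd.hasDerivWithinAt
      have hev : ∀ᶠ s in 𝓝[γ.dom \ {t}] t, slope f t s ∈ C ∧ δ ≤ ‖slope f t s‖ :=
        eventually_nhdsWithin_of_forall fun s hs => hslope s hs.1 hs.2
      have h1 := hC.isClosed.mem_of_tendsto hlim (hev.mono fun _ h => h.1)
      have h2 := ge_of_tendsto hlim.norm (hev.mono fun _ h => h.2)
      obtain ⟨u, hu, hu'⟩ := hD _ h1 (norm_pos_iff.1 (hδ.trans_le h2))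
      exact ⟨u, hu, hlim hu'⟩
  obtain ⟨r, hr, hu⟩ := Metric.mem_nhdsWithin_iff.1 hu
  obtain ⟨k₁, hk₁⟩ := exists_nat_one_div_lt hr
  obtain ⟨k₂, hk₂⟩ := exists_nat_gt δ⁻¹
  have ht0 : 0 ≤ t := by
    obtain ⟨p, hp, rfl⟩ := ht
    exact (γ.2.1 p hp).1
  refine ⟨u, huD, max k₁ k₂, ⌊2 * (((max k₁ k₂ : ℕ) : ℝ) + 1) * t⌋₊, t, ?_,
    Fragment.mk_fn_mem ht, fun q hq hqt => ?_⟩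
  · have hk : (0 : ℝ) < 2 * (((max k₁ k₂ : ℕ) : ℝ) + 1) := by positivity
    rw [Set.mem_Icc, div_le_iff₀ hk, le_div_iff₀ hk, mul_comm t]
    exact ⟨Nat.floor_le (by positivity), (Nat.lt_floor_add_one _).le⟩
  · have hs : q.1 ∈ γ.dom := ⟨q, hq, rfl⟩
    have hqs : φ q.2 = f q.1 := by rw [hf, Function.comp_apply, Fragment.fn_eq hq]
    change φ q.2 - f t ∈ _ ∧ _ ≤ _ * ‖φ q.2 - f t‖
    rw [hqs]
    have hk1 : (k₁ : ℝ) ≤ ((max k₁ k₂ : ℕ) : ℝ) := by exact_mod_cast le_max_left _ _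
    have hk2 : (k₂ : ℝ) ≤ ((max k₁ k₂ : ℕ) : ℝ) := by exact_mod_cast le_max_right _ _
    constructor
    · rcases eq_or_ne q.1 t with h | h
      · simp [h, tube]
      · have hqr : q.1 ∈ ball t r := by
          rw [mem_ball, Real.dist_eq]
          refine (hqt.trans_le ?_).trans hk₁
          gcongr
        have h1 := smul_mem_tube (q.1 - t) (hu ⟨hqr, hs, h⟩)
        rwa [sub_smul_slope, vsub_eq_sub] at h1
    · have h1 := (hCf _ hs).2
      calc |q.1 - t| = δ⁻¹ * (δ * |q.1 - t|) := by field_simp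
        _ ≤ (((max k₁ k₂ : ℕ) : ℝ) + 1) * ‖f q.1 - f t‖ := by
          gcongr
          linarith

lemma measure_eq_zero_of_piece [MeasurableSpace X] [BorelSpace X] {n : ℕ} {φ : X → E n} {K : ℝ≥0}
    (hφ : LipschitzWith K φ) {C D : Set (E n)} {η : ℝ} (hC : IsCone C)
    (hD : ∀ v ∈ C, v ≠ 0 → ∃ u ∈ D, tube u η ∈ 𝓝 v) {γ : Fragment X} (hγ : IsConeCurve φ C γ)
    {A : Set X} (hA : MeasurableSet A)
    (h : ∀ u ∈ D, ∀ k j, γ.measure (A ∩ Prod.mk γ ⁻¹' piece φ η u k j) = 0)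
    (hDc : D.Countable) : γ.measure A = 0 := by
  have hm : ∀ u k j, MeasurableSet (A ∩ Prod.mk γ ⁻¹' piece φ η u k j) := fun u k j =>
    hA.inter (((isClosed_aligned hφ.continuous (isClosed_tube u η) isCompact_Icc _ _).preimage
      (by fun_prop)).measurableSet)
  have hdiff := (hφ.comp_lipschitzOnWith γ.lipschitzOnWith_fn).ae_differentiableWithinAt_of_mem_real
  rw [γ.measure_apply hA]
  have hnull : volume (⋃ u ∈ D, ⋃ k, ⋃ j, γ.dom ∩ γ.fn ⁻¹'
      (A ∩ Prod.mk γ ⁻¹' piece φ η u k j)) = 0 := by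
    refine (measure_biUnion_null_iff hDc).2 fun u hu => measure_iUnion_null fun k =>
      measure_iUnion_null fun j => ?_
    rw [← γ.measure_apply (hm u k j)]
    exact h u hu k j
  refine measure_mono_null_ae ?_ hnull
  filter_upwards [hdiff] with t ht htA
  obtain ⟨u, hu, k, j, hp⟩ := exists_mem_piece hC hD hγ htA.1 (ht htA.1)
  change t ∈ ⋃ u ∈ D, ⋃ k, ⋃ j, γ.dom ∩ γ.fn ⁻¹' (A ∩ Prod.mk γ ⁻¹' piece φ η u k j)
  exact mem_biUnion hu (mem_iUnion₂.2 ⟨k, j, htA.1, htA.2, hp⟩)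

section

variable [SecondCountableTopology X] [MeasurableSpace X] [BorelSpace X] {n : ℕ} {μ : Measure X}
  {φ : X → E n} {K : ℝ≥0} {η : ℝ}

lemma measurableSet_piece (hφ : LipschitzWith K φ) (u : E n) (k j : ℕ) :
    MeasurableSet (piece φ η u k j) :=
  (isClosed_aligned hφ.continuous (isClosed_tube u η) isCompact_Icc _ _).measurableSet

/-- A measure with an Alberti representation is dominated, on a set of positive measure, by the
restriction of the representation to one of the sets `piece`. -/
lemma IsConeAlbertiRep.exists_subset_le_lintegral {C : Set (E n)} {ℙ : Measure (Fragment X)}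
    (h : IsConeAlbertiRep μ φ C ℙ) (hφ : LipschitzWith K φ) (hC : IsCone C) (hη : 0 < η)
    {B : Set X} (hB : MeasurableSet B) (hB0 : μ B ≠ 0) (hBt : μ B ≠ ∞) :
    ∃ B' ⊆ B, MeasurableSet B' ∧ μ B' ≠ 0 ∧ ∃ u ∈ C ∩ sphere 0 1, ∃ k j : ℕ, ∃ c : ℝ≥0∞, c ≠ ∞ ∧
      ∀ A, MeasurableSet A →
        μ (A ∩ B') ≤ c * ∫⁻ γ, γ.measure (A ∩ Prod.mk γ ⁻¹' piece φ η u k j) ∂ℙ := by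
  obtain ⟨hprob, hac, hcurve⟩ := h
  have hae : AEMeasurable (Fragment.measure : Fragment X → Measure X) ℙ := by
    by_contra hae
    refine hB0 (hac ?_)
    rw [nu, Measure.bind, Measure.map_of_not_aemeasurable hae, Measure.join_zero]
    rfl
  obtain ⟨κ₀, hκ₀, hκ₀1, hκ₀ae⟩ := hae.exists_ae_eq_range_subset
    (t := {m : Measure X | m univ ≤ 1}) (Eventually.of_forall fun γ => γ.measure_univ_le_one)
    ⟨0, by simp⟩
  let κ : ProbabilityTheory.Kernel (Fragment X) X := ⟨κ₀, hκ₀⟩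
  have hκfin : ProbabilityTheory.IsFiniteKernel κ :=
    ⟨⟨1, ENNReal.one_lt_top, fun γ => hκ₀1 (mem_range_self γ)⟩⟩
  obtain ⟨D, hDc, hDC, hD⟩ := exists_countable_tubes hC hη
  have hDcount : Countable D := hDc.to_subtype
  let ν : D × ℕ × ℕ → Measure X := fun a =>
    ((ℙ.compProd κ).restrict (piece φ η (a.1 : E n) a.2.1 a.2.2)).map Prod.snd
  have hν : ∀ a A, MeasurableSet A → ν a A =
      ∫⁻ γ, γ.measure (A ∩ Prod.mk γ ⁻¹' piece φ η (a.1 : E n) a.2.1 a.2.2) ∂ℙ := by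
    intro a A hA
    have hm := measurableSet_piece (η := η) hφ (a.1 : E n) a.2.1 a.2.2
    rw [Measure.map_apply measurable_snd hA, Measure.restrict_apply (measurable_snd hA),
      Measure.compProd_apply ((measurable_snd hA).inter hm)]
    refine lintegral_congr_ae ?_
    filter_upwards [hκ₀ae] with γ hγ
    rw [hγ]
    rfl
  have hnot : ∃ a, ¬ ν a ⟂ₘ μ.restrict B := by
    by_contra! hall
    obtain ⟨S, hS, hS0, hS1⟩ := Measure.MutuallySingular.sum_left.2 hall
    rw [Measure.restrict_apply hS.compl] at hS1
    have hνS : ∀ a, ν a S = 0 := by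
      rw [Measure.sum_apply _ hS] at hS0
      exact ENNReal.tsum_eq_zero.1 hS0
    have hnuS : nu ℙ S = 0 := by
      rw [nu, Measure.bind_apply hS hae, ← lintegral_zero (μ := ℙ)]
      have hall' : ∀ᵐ γ ∂ℙ, ∀ a : D × ℕ × ℕ,
          γ.measure (S ∩ Prod.mk γ ⁻¹' piece φ η (a.1 : E n) a.2.1 a.2.2) = 0 := by
        refine ae_all_iff.2 fun a => ?_
        have hm := measurableSet_piece (η := η) hφ (a.1 : E n) a.2.1 a.2.2
        have h1 := (Measure.ae_compProd_iff (μ := ℙ) (κ := κ)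
          (p := fun p => p ∉ Prod.snd ⁻¹' S ∩ piece φ η (a.1 : E n) a.2.1 a.2.2)
          ((measurable_snd hS).inter hm).compl).1 (by
            rw [← measure_eq_zero_iff_ae_notMem, ← Measure.restrict_apply (measurable_snd hS),
              ← Measure.map_apply measurable_snd hS]
            exact hνS a)
        filter_upwards [h1, hκ₀ae] with γ hγ hγ'
        rw [hγ']
        exact measure_eq_zero_iff_ae_notMem.2 hγ
      refine lintegral_congr_ae ?_
      filter_upwards [hall', hcurve] with γ h1 h2
      exact measure_eq_zero_of_piece hφ hC hD h2 hS (fun u hu k j => h1 ⟨⟨u, hu⟩, k, j⟩) hDc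
    have h1 : μ (B ∩ S) = 0 := measure_mono_null inter_subset_right (hac hnuS)
    refine hB0 (measure_mono_null ?_ (measure_union_null h1 (inter_comm B Sᶜ ▸ hS1)))
    rw [← inter_union_distrib_left, union_compl_self, inter_univ]
  obtain ⟨a, ha⟩ := hnot
  have hfin : IsFiniteMeasure (μ.restrict B) := ⟨by
    rwa [Measure.restrict_apply_univ, lt_top_iff_ne_top]⟩
  obtain ⟨ε, hε, F, hF, hF0, hFle⟩ :=
    Measure.exists_positive_of_not_mutuallySingular (ν a) (μ.restrict B) ha
  rw [Measure.restrict_apply hF, inter_comm] at hF0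
  refine ⟨B ∩ F, inter_subset_left, hB.inter hF, hF0.ne', a.1, hDC a.1.2, a.2.1, a.2.2,
    (ε : ℝ≥0∞)⁻¹, by simpa using hε.ne', fun A hA => ?_⟩
  have h1 := hFle A hA
  rw [Measure.restrict_apply (hA.inter hF)] at h1
  have hε0 : (ε : ℝ≥0∞) ≠ 0 := by simpa using hε.ne'
  rw [← hν a A hA]
  calc μ (A ∩ (B ∩ F)) = (ε : ℝ≥0∞)⁻¹ * (ε * μ (A ∩ F ∩ B)) := by
        rw [← mul_assoc, ENNReal.inv_mul_cancel hε0 ENNReal.coe_ne_top, one_mul, inter_assoc,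
          inter_comm F]
    _ ≤ (ε : ℝ≥0∞)⁻¹ * ν a A := by
        gcongr
        exact h1.trans (measure_mono inter_subset_left)

lemma exists_common_subset_le_lintegral {C : Fin n → Set (E n)}
    {ℙ : Fin n → Measure (Fragment X)} (h : ∀ i, IsConeAlbertiRep μ φ (C i) (ℙ i))
    (hφ : LipschitzWith K φ) (hC : ∀ i, IsCone (C i)) (hη : 0 < η)
    {B : Set X} (hB : MeasurableSet B) (hB0 : μ B ≠ 0) (hBt : μ B ≠ ∞) (s : Finset (Fin n)) :
    ∃ B' ⊆ B, MeasurableSet B' ∧ μ B' ≠ 0 ∧ ∀ i ∈ s, ∃ u ∈ C i ∩ sphere 0 1, ∃ k j : ℕ,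
      ∃ c : ℝ≥0∞, c ≠ ∞ ∧ ∀ A, MeasurableSet A →
        μ (A ∩ B') ≤ c * ∫⁻ γ, γ.measure (A ∩ Prod.mk γ ⁻¹' piece φ η u k j) ∂(ℙ i) := by
  induction s using Finset.induction with
  | empty => exact ⟨B, subset_rfl, hB, hB0, by simp⟩
  | insert i s _ ih =>
    obtain ⟨B₁, hB₁B, hB₁, hB₁0, hs⟩ := ih
    obtain ⟨B₂, hB₂B, hB₂, hB₂0, hi⟩ := (h i).exists_subset_le_lintegral hφ (hC i) hη hB₁ hB₁0
      (measure_ne_top_of_subset hB₁B hBt)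
    refine ⟨B₂, hB₂B.trans hB₁B, hB₂, hB₂0, fun i' hi' => ?_⟩
    rcases Finset.mem_insert.1 hi' with rfl | hi'
    · exact hi
    · obtain ⟨u, hu, k, j, c, hc, hle⟩ := hs i' hi'
      exact ⟨u, hu, k, j, c, hc, fun A hA =>
        (measure_mono (inter_subset_inter_right A hB₂B)).trans (hle A hA)⟩

end

/-- Unit vectors in independent cones are uniformly linearly independent. -/
lemma IndepCones.exists_pos_le_norm_sum {n m : ℕ} {C : Fin m → Set (E n)} (hC : ∀ i, IsCone (C i))
    (h : IndepCones C) : ∃ c > 0, ∀ u : Fin m → E n, (∀ i, u i ∈ C i ∩ sphere 0 1) →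
      ∀ a : Fin m → ℝ, c * ‖a‖ ≤ ‖∑ i, a i • u i‖ := by
  have hK : IsCompact ((Set.univ.pi fun i => C i ∩ sphere (0 : E n) 1) ×ˢ
      sphere (0 : Fin m → ℝ) 1) :=
    (isCompact_univ_pi fun i => (isCompact_sphere _ _).inter_left (hC i).isClosed).prod
      (isCompact_sphere _ _)
  obtain ⟨c, hc, hle⟩ := hK.exists_forall_le'
    (f := fun p : (Fin m → E n) × (Fin m → ℝ) => ‖∑ i, p.2 i • p.1 i‖)
    (by fun_prop) (a := 0) fun p hp => by
      obtain ⟨hp1, hp2⟩ := hp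
      rw [norm_pos_iff]
      intro h0
      have hu : ∀ i, p.1 i ∈ C i ∩ sphere 0 1 := fun i => hp1 i (Set.mem_univ i)
      have hli := h p.1 fun i => ⟨(hu i).1, ne_zero_of_mem_unit_sphere ⟨_, (hu i).2⟩⟩
      have h1 : p.2 = 0 := funext fun i => Fintype.linearIndependent_iff.1 hli p.2 h0 i
      exact ne_zero_of_mem_unit_sphere ⟨_, hp2⟩ h1
  refine ⟨c, hc, fun u hu a => ?_⟩
  rcases eq_or_ne a 0 with rfl | ha
  · simp
  have ha' : 0 < ‖a‖ := norm_pos_iff.2 ha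
  have h1 := hle (u, ‖a‖⁻¹ • a) ⟨fun i _ => hu i, by simp [norm_smul, ha'.ne']⟩
  simp only [Pi.smul_apply, smul_eq_mul, mul_smul, ← Finset.smul_sum, norm_smul, norm_inv,
    norm_norm] at h1
  rwa [inv_mul_eq_div, le_div_iff₀ ha'] at h1

/-- In suitable linear coordinates, thin tubes around the vectors of a quantitatively independent
family become thin tubes around the coordinate axes. -/
lemma exists_coordinates {n M : ℕ} (hM : 1 ≤ M) {c : ℝ} (hc : 0 < c) {u : Fin n → E n}
    (hu : ∀ a : Fin n → ℝ, c * ‖a‖ ≤ ‖∑ i, a i • u i‖) :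
    ∃ L : E n ≃L[ℝ] (Fin n → ℝ), ∀ i, ∀ v ∈ tube (u i) (c / (2 * M)), ∀ j, j ≠ i →
      M * |L v j| ≤ |L v i| := by
  have hli : LinearIndependent ℝ u := Fintype.linearIndependent_iff.2 fun a ha i => by
    have h1 := hu a
    rw [ha, norm_zero] at h1
    have h2 : ‖a‖ = 0 := le_antisymm (by
      by_contra! h; exact absurd h1 (not_le.2 (mul_pos hc h))) (norm_nonneg a)
    rw [norm_eq_zero.1 h2, Pi.zero_apply]
  let b := Module.Basis.mk hli (hli.span_eq_top_of_card_eq_finrank' (by simp)).ge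
  have hb : ∀ i, b i = u i := fun i => Module.Basis.mk_apply _ _ i
  let L := b.equivFunL
  have hL : ∀ v, c * ‖L v‖ ≤ ‖v‖ := fun v => by
    refine (hu (L v)).trans_eq ?_
    simp_rw [← hb]
    exact congrArg norm (b.sum_equivFun v)
  refine ⟨L, fun i v hv j hj => ?_⟩
  set s := ⟪v, u i⟫ with hs
  have hM' : (1 : ℝ) ≤ M := by exact_mod_cast hM
  have hLu : L (u i) = Pi.single i 1 := by
    rw [← hb]
    ext j
    exact (b.equivFun_self i j).trans (by simp [Pi.single_apply, eq_comm])
  have h1 : M * ‖L v - s • L (u i)‖ ≤ |s| / 2 := by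
    have h2 := (hL (v - s • u i)).trans hv
    rw [map_sub, map_smul] at h2
    have h3 : c * (M * ‖L v - s • L (u i)‖) ≤ c * (|s| / 2) := by
      calc c * (M * ‖L v - s • L (u i)‖) = M * (c * ‖L v - s • L (u i)‖) := by ring
        _ ≤ M * (c / (2 * M) * |s|) := by gcongr
        _ = c * (|s| / 2) := by field_simp
    exact le_of_mul_le_mul_left h3 hc
  have hj' : |L v j| ≤ ‖L v - s • L (u i)‖ := by
    have := norm_le_pi_norm (L v - s • L (u i)) j
    simpa [hLu, hj] using this
  have hi' : |L v i - s| ≤ ‖L v - s • L (u i)‖ := by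
    have := norm_le_pi_norm (L v - s • L (u i)) i
    simpa [hLu] using this
  have h4 : |s| ≤ |L v i| + |L v i - s| := by
    rw [abs_sub_comm]
    simpa using abs_add_le (L v i) (s - L v i)
  have h5 : ‖L v - s • L (u i)‖ ≤ M * ‖L v - s • L (u i)‖ :=
    le_mul_of_one_le_left (norm_nonneg _) hM'
  have h6 : M * |L v j| ≤ M * ‖L v - s • L (u i)‖ := by gcongr
  linarith

section

variable {n : ℕ} {φ : X → E n} {η : ℝ} {u : E n} {k j : ℕ}

lemma Fragment.time_unique {γ : Fragment X} {s t : ℝ} {x : X} (hs : (s, x) ∈ γ.graph)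
    (ht : (t, x) ∈ γ.graph) : s = t := by
  have := (γ.2.2 _ hs _ ht).1
  simpa [sub_eq_zero] using this

lemma abs_sub_lt_of_mem_Icc {s t : ℝ}
    (hs : s ∈ Icc ((j : ℝ) / (2 * (k + 1))) ((j + 1) / (2 * (k + 1))))
    (ht : t ∈ Icc ((j : ℝ) / (2 * (k + 1))) ((j + 1) / (2 * (k + 1)))) :
    |s - t| < 1 / (k + 1) := by
  refine (abs_sub_le_of_le_of_le hs.1 hs.2 ht.1 ht.2).trans_lt ?_
  rw [← _root_.sub_div, add_sub_cancel_left]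
  gcongr
  have hk : (0 : ℝ) < k + 1 := by positivity
  linarith

lemma isNarrow_image_piece {M : ℕ} {i : Fin n} {L : E n ≃L[ℝ] (Fin n → ℝ)}
    (hL : ∀ v ∈ tube u η, ∀ j, j ≠ i → M * |L v j| ≤ |L v i|) (γ : Fragment X) :
    IsNarrow M i ((fun x => L (φ x)) '' (Prod.mk γ ⁻¹' piece φ η u k j)) := by
  rintro _ ⟨x, ⟨t, ht, htx, hx⟩, rfl⟩ _ ⟨y, ⟨t', ht', hty, hy⟩, rfl⟩ j hj
  have h2 := hL _ (hy (t, x) htx (abs_sub_lt_of_mem_Icc ht ht')).1 j hj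
  simpa [map_sub] using h2

lemma measure_inter_cubeIndex_le [MeasurableSpace X] [BorelSpace X] {K : ℝ≥0}
    (hφ : LipschitzWith K φ) {M : ℕ} (hM : M ≠ 0) (L : E n ≃L[ℝ] (Fin n → ℝ)) (l : ℕ)
    (q : Fin n → ℤ) (γ : Fragment X) :
    γ.measure ({x | cubeIndex M l (L (φ x)) = q} ∩ Prod.mk γ ⁻¹' piece φ η u k j) ≤
      ENNReal.ofReal ((k + 1) * ‖(L.symm : (Fin n → ℝ) →L[ℝ] E n)‖) * (M : ℝ≥0∞)⁻¹ ^ l *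
        indicator {γ : Fragment X | ∃ z ∈ (fun x => L (φ x)) '' (Prod.mk γ ⁻¹' piece φ η u k j),
          cubeIndex M l z = q} 1 γ := by
  by_cases h : ∃ z ∈ (fun x => L (φ x)) '' (Prod.mk γ ⁻¹' piece φ η u k j), cubeIndex M l z = q
  swap
  · have hempty : {x | cubeIndex M l (L (φ x)) = q} ∩ Prod.mk γ ⁻¹' piece φ η u k j = ∅ :=
      eq_empty_of_forall_notMem fun x hx => h ⟨_, ⟨x, hx.2, rfl⟩, hx.1⟩
    rw [hempty, measure_empty]
    exact zero_le
  have hmem : γ ∈ {γ : Fragment X | ∃ z ∈ (fun x => L (φ x)) '' (Prod.mk γ ⁻¹' piece φ η u k j),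
      cubeIndex M l z = q} := h
  have hMpos : (0 : ℝ) < M := by exact_mod_cast Nat.pos_of_ne_zero hM
  have hm : MeasurableSet {x | cubeIndex M l (L (φ x)) = q} :=
    ((measurable_cubeIndex M l).comp (L.continuous.comp hφ.continuous).measurable)
      (measurableSet_singleton q)
  have hm' : MeasurableSet (Prod.mk γ ⁻¹' piece φ η u k j) :=
    ((isClosed_aligned hφ.continuous (isClosed_tube u η) isCompact_Icc _ _).preimage
      (by fun_prop)).measurableSet
  rw [indicator_of_mem hmem, Pi.one_apply, mul_one, γ.measure_apply (hm.inter hm')]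
  refine (Real.volume_le_diam _).trans (ediam_le fun t ht t' ht' => ?_)
  have hM2 : (M : ℝ≥0∞)⁻¹ ^ l = ENNReal.ofReal ((M : ℝ)⁻¹ ^ l) := by
    rw [ENNReal.ofReal_pow (by positivity), ENNReal.ofReal_inv_of_pos hMpos, ENNReal.ofReal_natCast]
  rw [edist_dist, hM2, ← ENNReal.ofReal_mul (by positivity)]
  refine ENNReal.ofReal_le_ofReal ?_
  obtain ⟨htd, htq, s, hs, hsx, hx⟩ := ht
  obtain ⟨htd', htq', s', hs', hsx', hx'⟩ := ht'
  obtain rfl := Fragment.time_unique hsx (Fragment.mk_fn_mem htd)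
  obtain rfl := Fragment.time_unique hsx' (Fragment.mk_fn_mem htd')
  have h2 := (hx' _ hsx (abs_sub_lt_of_mem_Icc hs hs')).2
  set v := φ (γ.fn s) - φ (γ.fn s') with hv
  have h3 : ‖L v‖ ≤ (M : ℝ)⁻¹ ^ l := by
    refine (pi_norm_le_iff_of_nonneg (by positivity)).2 fun i => ?_
    have h4 := abs_sub_le_of_cubeIndex_eq (htq.trans htq'.symm) i
    rw [inv_pow, inv_eq_one_div, le_div_iff₀ (by positivity), mul_comm, hv, map_sub]
    exact h4
  have h5 : ‖v‖ ≤ ‖(L.symm : (Fin n → ℝ) →L[ℝ] E n)‖ * ‖L v‖ := by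
    simpa using (L.symm : (Fin n → ℝ) →L[ℝ] E n).le_opNorm (L v)
  rw [Real.dist_eq]
  calc |s - s'| ≤ (k + 1) * ‖v‖ := h2
    _ ≤ (k + 1) * (‖(L.symm : (Fin n → ℝ) →L[ℝ] E n)‖ * (M : ℝ)⁻¹ ^ l) := by
      gcongr
      exact h5.trans (by gcongr)
    _ = _ := by ring

end

lemma exists_scale (n : ℕ) {α : ℝ} (hα : α < 1) :
    ∃ M : ℕ, 1 < M ∧ (3 : ℝ≥0∞) ^ n * (M : ℝ≥0∞) ^ α < M := by
  have h1 : Tendsto (fun M : ℕ => (M : ℝ≥0∞) ^ (1 - α)) atTop (𝓝 ∞) :=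
    (ENNReal.tendsto_rpow_at_top (by linarith)).comp ENNReal.tendsto_nat_nhds_top
  obtain ⟨M, h2, hM⟩ := ((h1.eventually_const_lt
    (show (3 : ℝ≥0∞) ^ n < ∞ from ENNReal.pow_lt_top (by simp))).and (eventually_gt_atTop 1)).exists
  refine ⟨M, hM, ?_⟩
  have hM0 : (M : ℝ≥0∞) ≠ 0 := by exact_mod_cast (by omega : M ≠ 0)
  have hMt : (M : ℝ≥0∞) ≠ ∞ := ENNReal.natCast_ne_top M
  have hα0 : (M : ℝ≥0∞) ^ α ≠ 0 := by simp [ENNReal.rpow_eq_zero_iff, hM0, hMt]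
  have hαt : (M : ℝ≥0∞) ^ α ≠ ∞ := by simp [ENNReal.rpow_eq_top_iff, hM0, hMt]
  calc (3 : ℝ≥0∞) ^ n * (M : ℝ≥0∞) ^ α < (M : ℝ≥0∞) ^ (1 - α) * (M : ℝ≥0∞) ^ α :=
        ENNReal.mul_lt_mul_left hα0 hαt h2
    _ = M := by rw [← ENNReal.rpow_add _ _ hM0 hMt, sub_add_cancel, ENNReal.rpow_one]

variable {X : Type*} [MetricSpace X] [CompleteSpace X] [TopologicalSpace.SeparableSpace X]
  [MeasurableSpace X] [BorelSpace X]

/-- If `μ` has `n` independent Alberti representations then every Borel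
set of positive measure has Hausdorff dimension at least `n`, i.e. `dim_H μ ≥ n`. -/
theorem dimH_ge_of_indep_alberti (μ : Measure X) [SigmaFinite μ] (n : ℕ)
    (h : HasIndepAlberti μ n) :
    ∀ B : Set X, MeasurableSet B → 0 < μ B → (n : ℝ≥0∞) ≤ dimH B := by
  intro B hB hB0
  rcases eq_or_ne n 0 with rfl | hn
  · simp
  by_contra! hlt
  have hX : SecondCountableTopology X := UniformSpace.secondCountable_of_separable X
  obtain ⟨s, hBs, hsn⟩ := ENNReal.lt_iff_exists_nnreal_btwn.1 hlt
  have hs : (0 : ℝ) < s := by exact_mod_cast zero_le.trans_lt hBs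
  have hsn' : (s : ℝ) < n := by exact_mod_cast hsn
  obtain ⟨M, hM, hMs⟩ := exists_scale n
    ((div_lt_one (by exact_mod_cast Nat.pos_of_ne_zero hn)).2 hsn')
  obtain ⟨φ, ⟨K, hφ⟩, C, hC, hCind, hℙ⟩ := h
  choose ℙ hℙ using hℙ
  have hℙprob : ∀ i, IsProbabilityMeasure (ℙ i) := fun i => (hℙ i).1
  obtain ⟨b, hb, hbC⟩ := hCind.exists_pos_le_norm_sum hC
  obtain ⟨B₁, hB₁, hB₁B, hB₁0, hB₁t⟩ := Measure.exists_subset_measure_lt_top hB hB0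
  have hM0 : (0 : ℝ) < M := by exact_mod_cast (by omega : 0 < M)
  obtain ⟨B₂, hB₂B, hB₂, hB₂0, hdom⟩ := exists_common_subset_le_lintegral hℙ hφ hC
    (show 0 < b / (2 * M) by positivity) hB₁ hB₁0.ne' hB₁t.ne Finset.univ
  choose u hu k j c hc hdom using fun i => hdom i (Finset.mem_univ i)
  obtain ⟨L, hL⟩ := exists_coordinates hM.le hb (hbC u hu)
  have hLφ : LipschitzWith _ fun x => L (φ x) := L.lipschitz.comp hφ
  have hLm : Measurable fun x => L (φ x) := hLφ.continuous.measurable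
  have hnull : μH[s] ((fun x => L (φ x)) '' B₂) = 0 :=
    hausdorffMeasure_of_dimH_lt (((hLφ.dimH_image_le _).trans
      (dimH_mono (hB₂B.trans hB₁B))).trans_lt hBs)
  let c' : Fin n → ℝ≥0∞ := fun i =>
    c i * ENNReal.ofReal ((k i + 1) * ‖(L.symm : (Fin n → ℝ) →L[ℝ] E n)‖)
  have hzero := measure_eq_zero_of_hausdorffMeasure_eq_zero hn hM
    (P := ℙ) (fun i γ => isNarrow_image_piece (k := k i) (j := j i) (hL i) γ) hs hMs
    ((μ.restrict B₂).map fun x => L (φ x)) (c := ∑ i, c' i)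
    (ENNReal.sum_ne_top.2 fun i _ => ENNReal.mul_ne_top (hc i) ENNReal.ofReal_ne_top)
    (fun l q i => by
      have hq : MeasurableSet {z : Fin n → ℝ | cubeIndex M l z = q} :=
        measurable_cubeIndex M l (measurableSet_singleton q)
      rw [Measure.map_apply hLm hq, Measure.restrict_apply (hLm hq)]
      refine (hdom i _ (hLm hq)).trans ?_
      calc _ ≤ c i * ∫⁻ γ, _ ∂(ℙ i) := mul_le_mul_right (lintegral_mono fun γ =>
            measure_inter_cubeIndex_le hφ (by omega) L l q γ) _
        _ = c' i * (M : ℝ≥0∞)⁻¹ ^ l * meet M (ℙ i) _ l q := by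
          rw [lintegral_const_mul' _ _ (ENNReal.mul_ne_top ENNReal.ofReal_ne_top
            (ENNReal.pow_ne_top (by simp; omega))), meet, ← mul_assoc, ← mul_assoc]
        _ ≤ _ := by
          gcongr
          exact Finset.single_le_sum (f := c') (fun _ _ => zero_le) (Finset.mem_univ i))
    hnull
  refine hB₂0 (le_antisymm ?_ zero_le)
  calc μ B₂ = μ.restrict B₂ B₂ := by rw [Measure.restrict_apply_self]
    _ ≤ μ.restrict B₂ ((fun x => L (φ x)) ⁻¹' ((fun x => L (φ x)) '' B₂)) :=
      measure_mono (subset_preimage_image _ _)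
    _ ≤ _ := Measure.le_map_apply hLm.aemeasurable _
    _ = 0 := hzero

end BKO
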